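/- arXiv:1109.5526 — 2 statements merged into one kernel-verified Lean document; each statement's English description precedes it below -/
import Mathlib

section
/- There exists a constant c : ℕ such that for every n ≥ 1 and every T ≥ T_n, K(T) + c·(Nat.size n) ≥ n (every number T at least as large as the stabilization time T_n has Kolmogorov complexity at least n - O(log n)). -/
open Nat.Partrec (Code)

/-- The length of a code: the number of binary digits of its code number. -/
def codeLength (e : Nat.Partrec.Code) : ℕ := Nat.size (Encodable.encode e)

/-- Plain Kolmogorov complexity of `x : ℕ`: the least `ℓ` such that some code `e`
of length `≤ ℓ` outputs `x` (on input `0`). -/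
noncomputable def K (x : ℕ) : ℕ :=
  sInf {ℓ : ℕ | ∃ e : Nat.Partrec.Code, codeLength e ≤ ℓ ∧ e.eval 0 = Part.some x}

/-- Time-bounded Kolmogorov complexity of `x : ℕ` with time bound `t`: the least `ℓ`
such that some code `e` of length `≤ ℓ` outputs `x` within `t` steps, and `⊤` if
there is no such code. -/
noncomputable def Kt (t : ℕ) (x : ℕ) : ℕ∞ :=
  sInf {ℓ : ℕ∞ | ∃ e : Nat.Partrec.Code,
    (codeLength e : ℕ∞) ≤ ℓ ∧ Nat.Partrec.Code.evaln t e 0 = some x}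

/-- `Tn n`: the least time `T` at which the time-bounded complexity of all strings of
length at most `n` (i.e. all `x < 2 ^ n`) equals the true complexity. -/
noncomputable def Tn (n : ℕ) : ℕ :=
  sInf {T : ℕ | ∀ x < 2 ^ n, Kt T x = (K x : ℕ∞)}

/-- `Tn' n`: the least time `T` at which the time-bounded complexity of all strings of
length at most `n` is at most twice the true complexity. -/
noncomputable def Tn' (n : ℕ) : ℕ :=
  sInf {T : ℕ | ∀ x < 2 ^ n, Kt T x ≤ 2 * (K x : ℕ∞)}

/-!
Suppose that a time `T` past the stabilization time has a description of length `L = K T`, much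
shorter than `n`, and let `M ≥ n` be the largest complexity of a number below `2 ^ n`. The least
number `y` that no code of length less than `M` outputs within `T` steps is below `2 ^ n`, hence
`K y ≥ M`. Since `y` is computable from `T` and `M`, a contradiction arises once `y` is given a
code of length less than `M`. Composing a code for `T` with a fixed program is too expensive,
because the binary constructors of `Code` roughly double the lengths of codes. What helps is a
comparison of the amounts of information that codes can hold.

The upper bound is on the capacity of the codes below `N`: the largest number of distinct outputs of
one adaptive query procedure whose questions are answered by an unknown code below `N`. One code in
sixteen is a nested unbounded search, and these have almost no capacity. This loss compounds over
the levels of the syntax tree, so that the codes of length `L` hold at most `ρ * L + O(1)` bits for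
some `ρ < 1`.

The lower bound comes from carriers, codes that compute a prescribed function of their input
together with a datum of their own. A query `e₁ ∘ prec Y e₂ ∘ e₃` asks `Y` for its value at a fixed
point and preserves the data carried by `e₁`, `e₂` and `e₃`; iterating this construction loses only
a vanishing proportion of what the values at the point can tell. A carrier can moreover ask another
code the questions of an optimal adaptive procedure, while being evaluated at a single point itself.
Hence the rate at which the capacity is attained by values at a single point can be improved as long
as it is less than `1`.

So carriers of length less than `M` hold more data than there are numbers of complexity at most
`L`. Matching the enumeration of the data with the enumeration of these numbers, some carrier holds
a datum that is decoded to `T` and then to `y`.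
-/

/-! ### Code numbers -/

/-- A binary constructor applied to codes with number below `N` has number below `grow N`, and this
is sharp. -/
def grow (N : ℕ) : ℕ := 4 * N ^ 2 + 4

theorem grow_strictMono : StrictMono grow := by
  intro M N h
  have := Nat.pow_lt_pow_left h two_ne_zero
  unfold grow; omega

theorem grow_mono : Monotone grow := grow_strictMono.monotone

theorem lt_grow (N : ℕ) : N < grow N := by unfold grow; nlinarith

/-- The largest `m` with `grow m ≤ N`; the junk value for `N < 4` is `0`. -/
def root (N : ℕ) : ℕ := Nat.sqrt ((N - 4) / 4)

theorem grow_root_le {N : ℕ} (h : 4 ≤ N) : grow (root N) ≤ N := by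
  have := Nat.sqrt_le' ((N - 4) / 4)
  unfold grow root; omega

theorem lt_grow_root_succ (N : ℕ) : N < grow (root N + 1) := by
  have := Nat.lt_succ_sqrt' ((N - 4) / 4)
  simp only [grow, root, Nat.succ_eq_add_one] at this ⊢
  omega

theorem le_root {m N : ℕ} (h : grow m ≤ N) : m ≤ root N :=
  Nat.lt_succ_iff.1 (grow_strictMono.lt_iff_lt.1 (h.trans_lt (lt_grow_root_succ N)))

theorem root_lt {N : ℕ} (h : 4 ≤ N) : root N < N := (lt_grow _).trans_le (grow_root_le h)

noncomputable instance : DecidableEq Code := Classical.decEq _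

/-- The codes whose number is below `N`. -/
noncomputable def codesBelow (N : ℕ) : Finset Code :=
  (Finset.range N).image (Denumerable.ofNat Code)

theorem mem_codesBelow {N : ℕ} {e : Code} : e ∈ codesBelow N ↔ Encodable.encode e < N := by
  simp only [codesBelow, Finset.mem_image, Finset.mem_range]
  constructor
  · rintro ⟨i, hi, rfl⟩; rwa [Denumerable.encode_ofNat]
  · exact fun h => ⟨_, h, Denumerable.ofNat_encode e⟩

theorem codesBelow_mono {M N : ℕ} (h : M ≤ N) : codesBelow M ⊆ codesBelow N := fun _ he =>
  mem_codesBelow.2 ((mem_codesBelow.1 he).trans_le h)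

theorem card_codesBelow_le (N : ℕ) : (codesBelow N).card ≤ N := by
  simpa [codesBelow] using
    Finset.card_image_le (s := Finset.range N) (f := Denumerable.ofNat Code)

theorem pair_lt_sq_iff {a b N : ℕ} : Nat.pair a b < N ^ 2 ↔ a < N ∧ b < N := by
  refine ⟨fun h => ?_, fun ⟨ha, hb⟩ =>
    (Nat.pair_lt_max_add_one_sq a b).trans_le (Nat.pow_le_pow_left (max_lt ha hb) 2)⟩
  have hmax : max a b ^ 2 ≤ Nat.pair a b :=
    le_of_add_le_left (Nat.max_sq_add_min_le_pair a b)
  exact max_lt_iff.1 (lt_of_pow_lt_pow_left₀ 2 (Nat.zero_le _) (hmax.trans_lt h))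

theorem encode_pair (f g : Code) : Encodable.encode (Code.pair f g) =
    4 * Nat.pair (Encodable.encode f) (Encodable.encode g) + 4 := by
  simp only [Code.encodeCode_eq, Code.encodeCode]; ring

theorem encode_comp (f g : Code) : Encodable.encode (Code.comp f g) =
    4 * Nat.pair (Encodable.encode f) (Encodable.encode g) + 6 := by
  simp only [Code.encodeCode_eq, Code.encodeCode]; ring

theorem encode_prec (f g : Code) : Encodable.encode (Code.prec f g) =
    4 * Nat.pair (Encodable.encode f) (Encodable.encode g) + 5 := by
  simp only [Code.encodeCode_eq, Code.encodeCode]; ring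

theorem encode_rfind' (f : Code) : Encodable.encode (Code.rfind' f) =
    4 * Encodable.encode f + 7 := by
  simp only [Code.encodeCode_eq, Code.encodeCode]; ring

theorem pair_mem_codesBelow {N : ℕ} {f g : Code} :
    Code.pair f g ∈ codesBelow (grow N) ↔ f ∈ codesBelow N ∧ g ∈ codesBelow N := by
  simp only [mem_codesBelow, ← pair_lt_sq_iff, encode_pair, grow]; omega

theorem comp_mem_codesBelow {N : ℕ} {f g : Code} :
    Code.comp f g ∈ codesBelow (grow N) ↔ f ∈ codesBelow N ∧ g ∈ codesBelow N := by
  simp only [mem_codesBelow, ← pair_lt_sq_iff, encode_comp, grow]; omega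

theorem prec_mem_codesBelow {N : ℕ} {f g : Code} :
    Code.prec f g ∈ codesBelow (grow N) ↔ f ∈ codesBelow N ∧ g ∈ codesBelow N := by
  simp only [mem_codesBelow, ← pair_lt_sq_iff, encode_prec, grow]; omega

theorem zero_mem_codesBelow {N : ℕ} (h : 1 ≤ N) : Code.zero ∈ codesBelow N :=
  mem_codesBelow.2 (Nat.lt_of_succ_le h)

/-! ### Evaluation as an option -/

open Classical in
/-- The value of a code at an input, with `none` for divergence. -/
noncomputable def value (e : Code) (q : ℕ) : Option ℕ := (e.eval q).toOption

theorem value_eq_some {e : Code} {q y : ℕ} : value e q = some y ↔ y ∈ e.eval q := by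
  classical
  rw [value, ← Part.mem_toOption]; rfl

theorem value_eq_some_iff_eval {e : Code} {q y : ℕ} :
    value e q = some y ↔ e.eval q = Part.some y :=
  value_eq_some.trans Part.eq_some_iff.symm

theorem value_eq_of_mem_iff {e : Code} {q : ℕ} {o : Option ℕ}
    (h : ∀ y, y ∈ e.eval q ↔ o = some y) : value e q = o :=
  Option.ext fun y => by rw [value_eq_some, h y]

theorem value_pair (f g : Code) (q : ℕ) :
    value (Code.pair f g) q = (value f q).bind fun a => (value g q).map (Nat.pair a) := by
  refine value_eq_of_mem_iff fun y => ?_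
  simp [Code.eval, Seq.seq, Option.bind_eq_some_iff, value_eq_some]

theorem value_comp (f g : Code) (q : ℕ) :
    value (Code.comp f g) q = (value g q).bind (value f) := by
  refine value_eq_of_mem_iff fun y => ?_
  rw [Option.bind_eq_some_iff]
  simp only [value_eq_some]
  exact Part.mem_bind_iff

theorem value_prec_zero (f g : Code) (a : ℕ) :
    value (Code.prec f g) (Nat.pair a 0) = value f a :=
  value_eq_of_mem_iff fun y => by rw [Code.eval_prec_zero, value_eq_some]

theorem value_prec_succ (f g : Code) (a n : ℕ) :
    value (Code.prec f g) (Nat.pair a (n + 1)) =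
      (value (Code.prec f g) (Nat.pair a n)).bind fun s => value g (Nat.pair a (Nat.pair n s)) := by
  refine value_eq_of_mem_iff fun y => ?_
  rw [← Nat.succ_eq_add_one, Code.eval_prec_succ]
  simp [Option.bind_eq_some_iff, value_eq_some]

theorem value_rfind'_eq_some {f : Code} {a m y : ℕ}
    (h : value (Code.rfind' f) (Nat.pair a m) = some y) :
    m ≤ y ∧ value f (Nat.pair a y) = some 0 ∧
      ∀ k, m ≤ k → k < y → ∃ v, v ≠ 0 ∧ value f (Nat.pair a k) = some v := by
  simp only [value_eq_some, Code.eval, Nat.unpaired, Nat.unpair_pair, Part.mem_map_iff] at h ⊢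
  obtain ⟨n, hn, rfl⟩ := h
  obtain ⟨hzero, hpos⟩ := Nat.mem_rfind.1 hn
  refine ⟨by omega, by simpa using hzero, fun k hmk hk => ?_⟩
  obtain ⟨v, hv, hv0⟩ := (Part.mem_map_iff _).1 (hpos (m := k - m) (by omega))
  rw [Nat.sub_add_cancel hmk] at hv
  exact ⟨v, by simpa using hv0, hv⟩

/-! ### Query trees and the adaptive capacity of a family of oracles -/

/-- A decision tree that asks questions of type `Q`, branches on the numerical answers and finally
outputs a number. -/
inductive QTree (Q : Type) : Type
  | leaf (o : ℕ) : QTree Q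
  | ask (q : Q) (next : ℕ → QTree Q) : QTree Q

namespace QTree

variable {Q Q' ι ι' : Type}

/-- The output of a tree run against a partial oracle; `none` if some question diverges. -/
def run (f : Q → Option ℕ) : QTree Q → Option ℕ
  | leaf o => some o
  | ask q next => (f q).bind fun y => run f (next y)

/-- Sequential composition of trees: the output of the first one selects the second one. -/
def seq : QTree Q → (ℕ → QTree Q) → QTree Q
  | leaf o, k => k o
  | ask q next, k => ask q fun y => seq (next y) k

theorem run_seq (f : Q → Option ℕ) (t : QTree Q) (k : ℕ → QTree Q) :
    (t.seq k).run f = (t.run f).bind fun o => (k o).run f := by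
  induction t with
  | leaf o => rfl
  | ask q next ih => simp only [seq, run, ih, Option.bind_assoc]

/-- Every question of the tree replaced by a subtree that computes its answer. -/
def subst (sim : Q' → QTree Q) : QTree Q' → QTree Q
  | leaf o => leaf o
  | ask q next => (sim q).seq fun y => subst sim (next y)

theorem run_subst {f' : Q' → Option ℕ} {f : Q → Option ℕ} {sim : Q' → QTree Q}
    (h : ∀ q y, f' q = some y → (sim q).run f = some y) (t : QTree Q') {o : ℕ}
    (ht : t.run f' = some o) : (t.subst sim).run f = some o := by
  induction t with
  | leaf o' => exact ht
  | ask q next ih =>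
    obtain ⟨y, hy, hnext⟩ := Option.bind_eq_some_iff.1 ht
    simp only [subst, run_seq, h q y hy, Option.bind_some]
    exact ih y hnext

/-- All outputs of a tree over a finite family of oracles. -/
noncomputable def outs (ans : ι → Q → Option ℕ) (F : Finset ι) (t : QTree Q) : Finset ℕ :=
  F.biUnion fun i => (t.run (ans i)).toFinset

theorem mem_outs {ans : ι → Q → Option ℕ} {F : Finset ι} {t : QTree Q} {o : ℕ} :
    o ∈ outs ans F t ↔ ∃ i ∈ F, t.run (ans i) = some o := by
  simp [outs]

theorem card_outs_le (ans : ι → Q → Option ℕ) (F : Finset ι) (t : QTree Q) :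
    (outs ans F t).card ≤ F.card := by
  refine (Finset.card_biUnion_le_card_mul F _ 1 fun i _ => ?_).trans_eq (mul_one _)
  cases t.run (ans i) <;> simp

/-- The adaptive capacity of a family of oracles: the largest number of distinct outputs that a
single tree has over the family. -/
noncomputable def cap (ans : ι → Q → Option ℕ) (F : Finset ι) : ℕ :=
  ⨆ t : QTree Q, (outs ans F t).card

theorem bddAbove_card_outs (ans : ι → Q → Option ℕ) (F : Finset ι) :
    BddAbove (Set.range fun t : QTree Q => (outs ans F t).card) :=
  ⟨F.card, by rintro _ ⟨t, rfl⟩; exact card_outs_le ans F t⟩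

instance : Nonempty (QTree Q) := ⟨leaf 0⟩

theorem card_outs_le_cap (ans : ι → Q → Option ℕ) (F : Finset ι) (t : QTree Q) :
    (outs ans F t).card ≤ cap ans F :=
  le_ciSup (bddAbove_card_outs ans F) t

theorem exists_card_outs_eq_cap (ans : ι → Q → Option ℕ) (F : Finset ι) :
    ∃ t : QTree Q, (outs ans F t).card = cap ans F :=
  Nat.sSup_mem (Set.range_nonempty _) (bddAbove_card_outs ans F)

theorem cap_le_card (ans : ι → Q → Option ℕ) (F : Finset ι) : cap ans F ≤ F.card :=
  ciSup_le (card_outs_le ans F)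

theorem one_le_cap {ans : ι → Q → Option ℕ} {F : Finset ι} (h : F.Nonempty) : 1 ≤ cap ans F := by
  obtain ⟨i, hi⟩ := h
  exact (Finset.card_pos.2 ⟨0, mem_outs.2 ⟨i, hi, rfl⟩⟩).trans_le
    (card_outs_le_cap ans F (leaf 0))

theorem cap_union_le [DecidableEq ι] (ans : ι → Q → Option ℕ) (F G : Finset ι) :
    cap ans (F ∪ G) ≤ cap ans F + cap ans G := by
  refine ciSup_le fun t => ?_
  rw [outs, Finset.union_biUnion]
  exact (Finset.card_union_le _ _).trans
    (add_le_add (card_outs_le_cap ans F t) (card_outs_le_cap ans G t))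

theorem cap_le_of_sim {ans' : ι' → Q' → Option ℕ} {ans : ι → Q → Option ℕ} {F' : Finset ι'}
    {F : Finset ι} (sim : Q' → QTree Q)
    (h : ∀ i' ∈ F', ∃ i ∈ F, ∀ q y, ans' i' q = some y → (sim q).run (ans i) = some y) :
    cap ans' F' ≤ cap ans F := by
  refine ciSup_le fun t => le_trans (Finset.card_le_card fun o ho => ?_)
    (card_outs_le_cap ans F (t.subst sim))
  obtain ⟨i', hi', hrun⟩ := mem_outs.1 ho
  obtain ⟨i, hi, hsim⟩ := h i' hi'
  exact mem_outs.2 ⟨i, hi, run_subst hsim t hrun⟩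

theorem cap_mono {ans : ι → Q → Option ℕ} {F G : Finset ι} (h : F ⊆ G) :
    cap ans F ≤ cap ans G :=
  cap_le_of_sim (fun q => ask q leaf) fun i hi => ⟨i, h hi, fun q y hy => by simp [run, hy]⟩

/-- The oracles of the family that answer `y` to the question `q`. -/
noncomputable def fiber (ans : ι → Q → Option ℕ) (F : Finset ι) (q : Q) (y : ℕ) : Finset ι :=
  F.filter fun i => ans i q = some y

theorem card_outs_ask_le (ans : ι → Q → Option ℕ) (F : Finset ι) (q : Q) (next : ℕ → QTree Q) :
    (outs ans F (ask q next)).card ≤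
      ∑ y ∈ outs ans F (ask q leaf), (outs ans (fiber ans F q y) (next y)).card := by
  refine le_trans (Finset.card_le_card fun o ho => ?_) Finset.card_biUnion_le
  obtain ⟨i, hi, hrun⟩ := mem_outs.1 ho
  obtain ⟨y, hy, hnext⟩ := Option.bind_eq_some_iff.1 hrun
  exact Finset.mem_biUnion.2 ⟨y, mem_outs.2 ⟨i, hi, by simp [run, hy]⟩,
    mem_outs.2 ⟨i, Finset.mem_filter.2 ⟨hi, hy⟩, hnext⟩⟩

-- The answer to the first question can be made part of the output.
theorem sum_cap_fiber_le (ans : ι → Q → Option ℕ) (F : Finset ι) (q : Q) (Y : Finset ℕ) :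
    ∑ y ∈ Y, cap ans (fiber ans F q y) ≤ cap ans F := by
  choose t ht using fun y => exists_card_outs_eq_cap ans (fiber ans F q y)
  calc ∑ y ∈ Y, cap ans (fiber ans F q y)
      = (Y.sigma fun y => outs ans (fiber ans F q y) (t y)).card := by
        rw [Finset.card_sigma]; exact Finset.sum_congr rfl fun y _ => (ht y).symm
    _ ≤ (outs ans F (ask q fun y => (t y).seq fun o => leaf (Nat.pair y o))).card := by
        refine Finset.card_le_card_of_injOn (fun p => Nat.pair p.1 p.2) ?_ ?_
        · rintro ⟨y, o⟩ h
          simp only [Finset.coe_sigma, Set.mem_sigma_iff, Finset.mem_coe, mem_outs, fiber,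
            Finset.mem_filter] at h
          obtain ⟨-, i, ⟨hi, hq⟩, hrun⟩ := h
          exact mem_outs.2 ⟨i, hi, by simp [run, hq, run_seq, hrun]⟩
        · rintro ⟨y, o⟩ _ ⟨y', o'⟩ _ h
          obtain ⟨rfl, rfl⟩ := Nat.pair_eq_pair.1 h
          rfl
    _ ≤ cap ans F := card_outs_le_cap ans F _

/-- Two independent oracles, asked through a sum of question types. -/
def sumAns (ans : ι → Q → Option ℕ) (ans' : ι' → Q' → Option ℕ) (p : ι × ι') :
    Q ⊕ Q' → Option ℕ :=
  Sum.elim (ans p.1) (ans' p.2)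

theorem fiber_sumAns_inl (ans : ι → Q → Option ℕ) (ans' : ι' → Q' → Option ℕ) (F : Finset ι)
    (G : Finset ι') (q : Q) (y : ℕ) :
    fiber (sumAns ans ans') (F ×ˢ G) (Sum.inl q) y = fiber ans F q y ×ˢ G :=
  Finset.filter_product_left fun i => ans i q = some y

theorem fiber_sumAns_inr (ans : ι → Q → Option ℕ) (ans' : ι' → Q' → Option ℕ) (F : Finset ι)
    (G : Finset ι') (q : Q') (y : ℕ) :
    fiber (sumAns ans ans') (F ×ˢ G) (Sum.inr q) y = F ×ˢ fiber ans' G q y :=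
  Finset.filter_product_right fun i => ans' i q = some y

theorem cap_sumAns_le (ans : ι → Q → Option ℕ) (ans' : ι' → Q' → Option ℕ) (F : Finset ι)
    (G : Finset ι') : cap (sumAns ans ans') (F ×ˢ G) ≤ cap ans F * cap ans' G := by
  refine ciSup_le fun t => ?_
  induction t generalizing F G with
  | leaf o =>
    rcases (F ×ˢ G).eq_empty_or_nonempty with h | h
    · simp [outs, h]
    · obtain ⟨hF, hG⟩ := Finset.nonempty_product.1 h
      refine le_trans (Finset.card_le_one.2 fun a ha b hb => ?_)
        (Nat.mul_le_mul (one_le_cap hF) (one_le_cap hG))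
      obtain ⟨_, _, hla⟩ := mem_outs.1 ha
      obtain ⟨_, _, hlb⟩ := mem_outs.1 hb
      exact Option.some.inj (hla.symm.trans hlb)
  | ask q next ih =>
    refine (card_outs_ask_le _ _ _ _).trans ?_
    rcases q with q | q
    · refine (Finset.sum_le_sum fun y _ => ?_).trans
        ((Finset.sum_mul _ _ _).ge.trans (Nat.mul_le_mul_right _ (sum_cap_fiber_le ans F q _)))
      rw [fiber_sumAns_inl]
      exact ih y _ G
    · refine (Finset.sum_le_sum fun y _ => ?_).trans
        ((Finset.mul_sum _ _ _).ge.trans (Nat.mul_le_mul_left _ (sum_cap_fiber_le ans' G q _)))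
      rw [fiber_sumAns_inr]
      exact ih y F _

end QTree

/-! ### The capacity of the codes below a bound -/

open QTree

/-- The adaptive capacity of the family of codes with number below `N`. -/
noncomputable def codeCap (N : ℕ) : ℕ := cap value (codesBelow N)

theorem codeCap_mono : Monotone codeCap := fun _ _ h => cap_mono (codesBelow_mono h)

theorem codeCap_le (N : ℕ) : codeCap N ≤ N := (cap_le_card _ _).trans (card_codesBelow_le N)

theorem one_le_codeCap {N : ℕ} (h : 1 ≤ N) : 1 ≤ codeCap N :=
  one_le_cap ⟨Code.zero, zero_mem_codesBelow h⟩

theorem codeCap_succ_le {N : ℕ} (h : 1 ≤ N) : codeCap (N + 1) ≤ 2 * codeCap N := by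
  have hsub : codesBelow (N + 1) ⊆ codesBelow N ∪ {Denumerable.ofNat Code N} := by
    intro e he
    rw [Finset.mem_union, mem_codesBelow, Finset.mem_singleton]
    rcases Nat.lt_succ_iff_lt_or_eq.1 (mem_codesBelow.1 he) with h | h
    · exact Or.inl h
    · exact Or.inr (by rw [← h, Denumerable.ofNat_encode])
  calc codeCap (N + 1) ≤ codeCap N + cap value {Denumerable.ofNat Code N} :=
        (cap_mono hsub).trans (cap_union_le _ _ _)
    _ ≤ codeCap N + codeCap N :=
        Nat.add_le_add_left ((cap_le_card _ _).trans (one_le_codeCap h)) _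
    _ = 2 * codeCap N := (two_mul _).symm

theorem cap_pair_le (F G : Finset Code) :
    cap value ((F ×ˢ G).image fun p => Code.pair p.1 p.2) ≤ cap value F * cap value G := by
  refine le_trans (cap_le_of_sim (fun q => ask (Sum.inl q) fun a => ask (Sum.inr q) fun b =>
    leaf (Nat.pair a b)) fun e he => ?_) (cap_sumAns_le value value F G)
  obtain ⟨p, hp, rfl⟩ := Finset.mem_image.1 he
  refine ⟨p, hp, fun q y h => ?_⟩
  simp only [value_pair, Option.bind_eq_some_iff, Option.map_eq_some_iff] at h
  obtain ⟨a, ha, b, hb, rfl⟩ := h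
  simp [run, sumAns, ha, hb]

theorem cap_comp_le (F G : Finset Code) :
    cap value ((F ×ˢ G).image fun p => Code.comp p.1 p.2) ≤ cap value F * cap value G := by
  refine le_trans (cap_le_of_sim (fun q => ask (Sum.inr q) fun a => ask (Sum.inl a) leaf)
    fun e he => ?_) (cap_sumAns_le value value F G)
  obtain ⟨p, hp, rfl⟩ := Finset.mem_image.1 he
  refine ⟨p, hp, fun q y h => ?_⟩
  obtain ⟨a, ha, hb⟩ := Option.bind_eq_some_iff.1 ((value_comp _ _ _).symm.trans h)
  simp [run, sumAns, ha, hb]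

/-- The tree computing a primitive recursion with parameter `a` up to `n`; the two summands ask the
base and the step function. -/
def precTree (a : ℕ) : ℕ → QTree (ℕ ⊕ ℕ)
  | 0 => ask (Sum.inl a) leaf
  | n + 1 => (precTree a n).seq fun s => ask (Sum.inr (Nat.pair a (Nat.pair n s))) leaf

theorem run_precTree {f g : Code} {a n y : ℕ}
    (h : value (Code.prec f g) (Nat.pair a n) = some y) :
    (precTree a n).run (sumAns value value (f, g)) = some y := by
  induction n generalizing y with
  | zero =>
    rw [value_prec_zero] at h
    simp [precTree, run, sumAns, h]
  | succ n ih =>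
    rw [value_prec_succ] at h
    obtain ⟨s, hs, hy⟩ := Option.bind_eq_some_iff.1 h
    rw [precTree, run_seq, ih hs]
    simp [run, sumAns, hy]

theorem cap_prec_le (F G : Finset Code) :
    cap value ((F ×ˢ G).image fun p => Code.prec p.1 p.2) ≤ cap value F * cap value G := by
  refine le_trans (cap_le_of_sim (fun q => precTree q.unpair.1 q.unpair.2)
    fun e he => ?_) (cap_sumAns_le value value F G)
  obtain ⟨p, hp, rfl⟩ := Finset.mem_image.1 he
  refine ⟨p, hp, fun q y h => run_precTree ?_⟩
  rwa [Nat.pair_unpair]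

/-- The tree searching for a zero at `(a, m), (a, m + 1), …`; it gives up after `k` questions. -/
def rfindTree (a : ℕ) : ℕ → ℕ → QTree ℕ
  | 0, _ => leaf 0
  | k + 1, m => ask (Nat.pair a m) fun y => if y = 0 then leaf m else rfindTree a k (m + 1)

theorem run_rfindTree {f : Code} {a k m y : ℕ} (hm : m ≤ y) (hk : y < m + k)
    (h0 : value f (Nat.pair a y) = some 0)
    (h : ∀ i, m ≤ i → i < y → ∃ v, v ≠ 0 ∧ value f (Nat.pair a i) = some v) :
    (rfindTree a k m).run (value f) = some y := by
  induction k generalizing m with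
  | zero => omega
  | succ k ih =>
    rcases hm.eq_or_lt with rfl | hlt
    · simp [rfindTree, run, h0]
    · obtain ⟨v, hv, hv'⟩ := h m le_rfl hlt
      simp only [rfindTree, run, hv', Option.bind_some, if_neg hv]
      exact ih hlt (by omega) fun i hi hi' => h i (by omega) hi'

theorem cap_rfind'_le (F : Finset Code) : cap value (F.image Code.rfind') ≤ cap value F := by
  refine cap_le_of_sim (fun q => rfindTree q.unpair.1
    (F.sup (fun f => (value (Code.rfind' f) q).getD 0) + 1) q.unpair.2) fun e he => ?_
  obtain ⟨f, hf, rfl⟩ := Finset.mem_image.1 he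
  refine ⟨f, hf, fun q y h => ?_⟩
  have hfuel : y ≤ F.sup fun f => (value (Code.rfind' f) q).getD 0 := by
    simpa [h] using Finset.le_sup (f := fun f => (value (Code.rfind' f) q).getD 0) hf
  rw [← Nat.pair_unpair q] at h
  obtain ⟨hm, h0, hne⟩ := value_rfind'_eq_some h
  exact run_rfindTree hm (by omega) h0 hne

-- The inner search on `(a, m)` returns at least `m`, so the outer one can only return `0`.
theorem cap_rfind'_rfind'_le (F : Finset Code) :
    cap value (F.image fun f => Code.rfind' (Code.rfind' f)) ≤ 1 := by
  refine le_trans (cap_le_of_sim (ans := fun (_ : Unit) (_ : ℕ) => some 0) (F := {()})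
    (fun _ => leaf 0) fun e he => ?_) ((cap_le_card _ _).trans (by simp))
  obtain ⟨f, -, rfl⟩ := Finset.mem_image.1 he
  refine ⟨(), by simp, fun q y h => ?_⟩
  rw [← Nat.pair_unpair q] at h
  obtain ⟨-, h0, -⟩ := value_rfind'_eq_some h
  obtain ⟨hy, -, -⟩ := value_rfind'_eq_some h0
  rw [Nat.le_zero.1 hy]
  rfl

/-- The codes without subcodes. -/
noncomputable def baseCodes : Finset Code := {Code.zero, Code.succ, Code.left, Code.right}

/-- The codes formed by a binary constructor from two codes below `N`. -/
noncomputable def binCodes (N : ℕ) : Finset Code :=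
  ((codesBelow N ×ˢ codesBelow N).image fun p => Code.pair p.1 p.2) ∪
  (((codesBelow N ×ˢ codesBelow N).image fun p => Code.comp p.1 p.2) ∪
  ((codesBelow N ×ˢ codesBelow N).image fun p => Code.prec p.1 p.2))

theorem cap_baseCodes_union_binCodes_le (N : ℕ) :
    cap value (baseCodes ∪ binCodes N) ≤ 4 + 3 * codeCap N ^ 2 := by
  have hbase : cap value baseCodes ≤ 4 := (cap_le_card _ _).trans Finset.card_le_four
  have hpair := cap_pair_le (codesBelow N) (codesBelow N)
  have hcomp := cap_comp_le (codesBelow N) (codesBelow N)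
  have hprec := cap_prec_le (codesBelow N) (codesBelow N)
  refine (cap_union_le _ _ _).trans (Nat.add_le_add hbase ?_)
  refine (cap_union_le _ _ _).trans ((Nat.add_le_add_left (cap_union_le _ _ _) _).trans ?_)
  rw [codeCap, pow_two]
  omega

theorem codesBelow_grow_subset (N : ℕ) :
    codesBelow (grow N) ⊆ (baseCodes ∪ binCodes N) ∪ (codesBelow (N ^ 2)).image Code.rfind' := by
  intro e he
  simp only [Finset.mem_union, Finset.mem_image, binCodes, baseCodes, Finset.mem_insert,
    Finset.mem_singleton, Finset.mem_product, Prod.exists]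
  cases e with
  | zero | succ | left | right => simp
  | pair f g => have := pair_mem_codesBelow.1 he; grind
  | comp f g => have := comp_mem_codesBelow.1 he; grind
  | prec f g => have := prec_mem_codesBelow.1 he; grind
  | rfind' f =>
    refine Or.inr ⟨f, ?_, rfl⟩
    rw [mem_codesBelow, encode_rfind', grow] at he
    rw [mem_codesBelow]
    omega

theorem image_rfind'_codesBelow_sq_subset (N : ℕ) :
    (codesBelow (N ^ 2)).image Code.rfind' ⊆
      (baseCodes ∪ binCodes (N / 2 + 1)).image Code.rfind' ∪
        (codesBelow (N ^ 2)).image fun f => Code.rfind' (Code.rfind' f) := by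
  have hsq : N ^ 2 ≤ grow (N / 2 + 1) := by
    have hle : N ^ 2 ≤ (2 * (N / 2 + 1)) ^ 2 := Nat.pow_le_pow_left (by omega) 2
    rw [mul_pow] at hle
    unfold grow; omega
  refine Finset.image_subset_iff.2 fun f hf => Finset.mem_union.2 ?_
  rcases Finset.mem_union.1 (codesBelow_grow_subset _ (codesBelow_mono hsq hf)) with h | h
  · exact Or.inl (Finset.mem_image_of_mem _ h)
  · obtain ⟨g, -, rfl⟩ := Finset.mem_image.1 h
    refine Or.inr (Finset.mem_image.2 ⟨g, ?_, rfl⟩)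
    rw [mem_codesBelow, encode_rfind'] at hf
    rw [mem_codesBelow]
    omega

theorem codeCap_grow_le (N : ℕ) :
    codeCap (grow N) ≤ 9 + 3 * codeCap N ^ 2 + 3 * codeCap (N / 2 + 1) ^ 2 := by
  have hbin := cap_baseCodes_union_binCodes_le N
  have hsearch := (cap_rfind'_le _).trans (cap_baseCodes_union_binCodes_le (N / 2 + 1))
  have hnested := cap_rfind'_rfind'_le (codesBelow (N ^ 2))
  calc codeCap (grow N)
      ≤ cap value (baseCodes ∪ binCodes N) + cap value ((codesBelow (N ^ 2)).image Code.rfind') :=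
        (cap_mono (codesBelow_grow_subset N)).trans (cap_union_le _ _ _)
    _ ≤ cap value (baseCodes ∪ binCodes N) +
          (cap value ((baseCodes ∪ binCodes (N / 2 + 1)).image Code.rfind') +
            cap value ((codesBelow (N ^ 2)).image fun f => Code.rfind' (Code.rfind' f))) :=
        Nat.add_le_add_left ((cap_mono (image_rfind'_codesBelow_sq_subset N)).trans
          (cap_union_le _ _ _)) _
    _ ≤ 9 + 3 * codeCap N ^ 2 + 3 * codeCap (N / 2 + 1) ^ 2 := by omega

theorem codeCap_grow_le_mul_sq {N : ℕ} (hN : 2 ≤ N) : codeCap (grow N) ≤ 15 * codeCap N ^ 2 := by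
  have hrec := codeCap_grow_le N
  have hhalf : codeCap (N / 2 + 1) ^ 2 ≤ codeCap N ^ 2 :=
    Nat.pow_le_pow_left (codeCap_mono (by omega)) 2
  have hpos : 1 ≤ codeCap N ^ 2 := Nat.one_le_pow _ _ (one_le_codeCap (by omega))
  omega

/-! ### The capacity is a small fraction of the number of codes -/

-- The factor `0.95` is an upper bound of `15 / 16`: the codes `rfind' (rfind' f)` contribute
-- nothing.
theorem eventually_codeCap_le_sq {δ : ℝ} (hδ : 0 < δ)
    (h : ∀ᶠ N : ℕ in Filter.atTop, (codeCap N : ℝ) ≤ δ * N) :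
    ∀ᶠ N : ℕ in Filter.atTop, (codeCap N : ℝ) ≤ 0.95 * δ ^ 2 * N := by
  obtain ⟨B, hB⟩ := Filter.eventually_atTop.1 h
  obtain ⟨c, hc⟩ := exists_nat_ge (9 / δ ^ 2)
  rw [div_le_iff₀ (by positivity)] at hc
  refine Filter.eventually_atTop.2 ⟨grow (2 * B + 500 + c), fun N hN => ?_⟩
  set m := root N with hm
  have hmB : 2 * B + 500 + c ≤ m := le_root hN
  have hmc : (500 : ℝ) + c ≤ m := by exact_mod_cast (by omega : 500 + c ≤ m)
  have hmN : 4 * (m : ℝ) ^ 2 ≤ N := by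
    have hroot := grow_root_le (le_trans (by unfold grow; omega) hN)
    rw [← hm, grow] at hroot
    exact_mod_cast (by omega : 4 * m ^ 2 ≤ N)
  have hfull : (codeCap (m + 1) : ℝ) ≤ δ * (m + 1) := by exact_mod_cast hB (m + 1) (by omega)
  have hhalf : (codeCap ((m + 1) / 2 + 1) : ℝ) ≤ δ * ((m + 3) / 2) := by
    refine (hB _ (by omega)).trans ?_
    gcongr
    rw [le_div_iff₀ two_pos]
    exact_mod_cast (by omega : ((m + 1) / 2 + 1) * 2 ≤ m + 3)
  calc (codeCap N : ℝ)
      ≤ 9 + 3 * (codeCap (m + 1) : ℝ) ^ 2 + 3 * (codeCap ((m + 1) / 2 + 1) : ℝ) ^ 2 := by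
        exact_mod_cast (codeCap_mono (lt_grow_root_succ N).le).trans (codeCap_grow_le (m + 1))
    _ ≤ c * δ ^ 2 + 3 * (δ * (m + 1)) ^ 2 + 3 * (δ * ((m + 3) / 2)) ^ 2 := by gcongr
    _ = δ ^ 2 * (c + 3 * (m + 1) ^ 2 + 3 * (((m : ℝ) + 3) / 2) ^ 2) := by ring
    _ ≤ δ ^ 2 * (0.95 * (4 * (m : ℝ) ^ 2)) := by
        refine mul_le_mul_of_nonneg_left ?_ (by positivity)
        nlinarith
    _ ≤ δ ^ 2 * (0.95 * N) := by gcongr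
    _ = 0.95 * δ ^ 2 * N := by ring

theorem eventually_codeCap_le_mul {ε : ℝ} (hε : 0 < ε) :
    ∀ᶠ N : ℕ in Filter.atTop, (codeCap N : ℝ) ≤ ε * N := by
  have hpow (k : ℕ) : ∀ᶠ N : ℕ in Filter.atTop, (codeCap N : ℝ) ≤ 0.95 ^ k * N := by
    induction k with
    | zero => exact Filter.Eventually.of_forall fun N => by simpa using codeCap_le N
    | succ k ih =>
      filter_upwards [eventually_codeCap_le_sq (by positivity) ih] with N hN
      refine hN.trans ?_
      have hle : ((0.95 : ℝ) ^ k) ^ 2 ≤ 0.95 ^ k :=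
        pow_le_of_le_one (by positivity) (pow_le_one₀ (by norm_num) (by norm_num)) two_ne_zero
      rw [pow_succ' 0.95 k]
      gcongr
  obtain ⟨k, hk⟩ := exists_pow_lt_of_lt_one hε (by norm_num : (0.95 : ℝ) < 1)
  filter_upwards [hpow k] with N hN
  exact hN.trans (by gcongr)

/-- The logarithmic capacity, normalized by a constant so that it at most doubles when `N` is
replaced by `grow (N + 1)`. -/
noncomputable def logCap (N : ℕ) : ℝ := Real.logb 2 (codeCap N) + 6

theorem logb_codeCap_eq (N : ℕ) : Real.logb 2 (codeCap N) = logCap N - 6 :=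
  (add_sub_cancel_right _ _).symm

theorem six_le_logCap {N : ℕ} (h : 1 ≤ N) : 6 ≤ logCap N :=
  le_add_of_nonneg_left (Real.logb_nonneg one_lt_two (by exact_mod_cast one_le_codeCap h))

theorem logCap_le_of_le {M N : ℕ} (hM : 1 ≤ M) (h : M ≤ N) : logCap M ≤ logCap N := by
  have hpos : (0 : ℝ) < codeCap M := by exact_mod_cast one_le_codeCap hM
  exact add_le_add_left (Real.logb_le_logb_of_le one_lt_two hpos
    (by exact_mod_cast codeCap_mono h)) 6

theorem logCap_le_two_mul {m N : ℕ} (hm : 1 ≤ m) (hN : 1 ≤ N) (h : N ≤ grow (m + 1)) :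
    logCap N ≤ 2 * logCap m := by
  have hm' : (0 : ℝ) < codeCap m := by exact_mod_cast one_le_codeCap hm
  have hN' : (0 : ℝ) < codeCap N := by exact_mod_cast one_le_codeCap hN
  have hsq : (codeCap N : ℝ) ≤ 2 ^ 6 * (codeCap m : ℝ) ^ 2 := by
    have hgrow := (codeCap_mono h).trans (codeCap_grow_le_mul_sq (by omega))
    have hsucc := codeCap_succ_le hm
    norm_num
    exact_mod_cast (by nlinarith : codeCap N ≤ 64 * codeCap m ^ 2)
  have hlog := Real.logb_le_logb_of_le one_lt_two hN' hsq
  rw [Real.logb_mul (by positivity) (by positivity), Real.logb_pow, Real.logb_pow,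
    Real.logb_self_eq_one one_lt_two] at hlog
  push_cast at hlog
  unfold logCap
  linarith

theorem eventually_logCap_le_sub_one :
    ∀ᶠ N : ℕ in Filter.atTop, logCap N ≤ Real.logb 2 N - 1 := by
  filter_upwards [eventually_codeCap_le_mul (ε := 2 ^ (-7 : ℝ)) (by positivity),
    Filter.eventually_ge_atTop 1] with N hN hN1
  have hlog := Real.logb_le_logb_of_le one_lt_two (by exact_mod_cast one_le_codeCap hN1) hN
  rw [Real.logb_mul (by positivity) (by positivity), Real.logb_rpow two_pos (by norm_num)] at hlog
  unfold logCap
  linarith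

theorem exists_eventually_logCap_le :
    ∃ ρ : ℝ, 0 < ρ ∧ ρ < 1 ∧ ∀ᶠ N : ℕ in Filter.atTop, logCap N ≤ ρ * Real.logb 2 N := by
  obtain ⟨B₀, hB₀⟩ := Filter.eventually_atTop.1 eventually_logCap_le_sub_one
  set B := B₀ + 2
  set G := Real.logb 2 (grow B) with hG
  have hG2 : 2 ≤ G := by
    rw [hG, Real.le_logb_iff_rpow_le one_lt_two (by exact_mod_cast Nat.succ_pos _)]
    exact_mod_cast (by unfold grow; omega : 2 ^ 2 ≤ grow B)
  have hG_inv : 1 / G ≤ 1 / 2 := by gcongr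
  have hG_pos : 0 < 1 / G := by positivity
  refine ⟨1 - 1 / G, by linarith, by linarith, Filter.eventually_atTop.2 ⟨B, fun N => ?_⟩⟩
  induction N using Nat.strong_induction_on with
  | _ N ih =>
    intro hN
    have hN_pos : (0 : ℝ) < N := by exact_mod_cast (by omega : 0 < N)
    rcases lt_or_ge N (grow B) with hlt | hge
    · have hcap := hB₀ N (by omega)
      have hlogN : Real.logb 2 N ≤ G :=
        Real.logb_le_logb_of_le one_lt_two hN_pos (by exact_mod_cast hlt.le)
      have hfrac : 1 / G * Real.logb 2 N ≤ 1 := by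
        rw [one_div, inv_mul_le_iff₀ (by linarith)]; linarith
      linarith
    · have hN4 : 4 ≤ N := le_trans (by unfold grow; omega) hge
      have hBm : B ≤ root N := le_root hge
      have hsq : ((root N : ℕ) : ℝ) ^ 2 ≤ N := by
        have hroot := grow_root_le hN4
        rw [grow] at hroot
        exact_mod_cast (by omega : root N ^ 2 ≤ N)
      have hlog := Real.logb_le_logb_of_le one_lt_two
        (pow_pos (by exact_mod_cast (by omega : 0 < root N)) 2) hsq
      rw [Real.logb_pow, Nat.cast_two] at hlog
      have hdouble := logCap_le_two_mul (by omega) (by omega) (lt_grow_root_succ N).le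
      have hih := ih _ (root_lt hN4) hBm
      nlinarith

theorem exists_logb_codeCap_two_pow_le : ∃ ρ : ℝ, 0 < ρ ∧ ρ < 1 ∧ ∃ C : ℝ, ∀ L : ℕ,
    Real.logb 2 (codeCap (2 ^ L)) ≤ ρ * L + C := by
  obtain ⟨ρ, hρ0, hρ1, hev⟩ := exists_eventually_logCap_le
  obtain ⟨B, hB⟩ := Filter.eventually_atTop.1 hev
  refine ⟨ρ, hρ0, hρ1, logCap (2 ^ B), fun L => ?_⟩
  rw [logb_codeCap_eq]
  have hC := six_le_logCap (N := 2 ^ B) Nat.one_le_two_pow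
  rcases le_total B L with h | h
  · have hL := hB (2 ^ L) (h.trans Nat.lt_two_pow_self.le)
    rw [Nat.cast_pow, Nat.cast_two, Real.logb_pow, Real.logb_self_eq_one one_lt_two,
      mul_one] at hL
    linarith
  · have hL := logCap_le_of_le Nat.one_le_two_pow (Nat.pow_le_pow_right two_pos h)
    have : 0 ≤ ρ * (L : ℝ) := by positivity
    linarith

/-! ### Values at a point -/

/-- The values at `x` of the codes below `N`. -/
noncomputable def vals (x N : ℕ) : Finset ℕ := (codesBelow N).biUnion fun e => (value e x).toFinset

theorem mem_vals {x N v : ℕ} : v ∈ vals x N ↔ ∃ e ∈ codesBelow N, value e x = some v := by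
  simp [vals]

theorem vals_mono (x : ℕ) {M N : ℕ} (h : M ≤ N) : vals x M ⊆ vals x N :=
  Finset.biUnion_subset_biUnion_of_subset_left _ (codesBelow_mono h)

theorem card_vals_pos (x : ℕ) {N : ℕ} (h : 1 ≤ N) : 0 < (vals x N).card :=
  Finset.card_pos.2 ⟨0, mem_vals.2 ⟨Code.zero, zero_mem_codesBelow h,
    value_eq_some.2 (Part.mem_some 0)⟩⟩

theorem injective2_natPair : Function.Injective2 Nat.pair := fun _ _ _ _ => Nat.pair_eq_pair.1

theorem image₂_vals_subset (x N : ℕ) :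
    Finset.image₂ Nat.pair (vals x N) (vals x N) ⊆ vals x (grow N) := by
  refine Finset.image₂_subset_iff.2 fun u hu v hv => ?_
  obtain ⟨e, he, heu⟩ := mem_vals.1 hu
  obtain ⟨f, hf, hfv⟩ := mem_vals.1 hv
  exact mem_vals.2 ⟨Code.pair e f, pair_mem_codesBelow.2 ⟨he, hf⟩, by simp [value_pair, heu, hfv]⟩

/-- The number of bits that the value at `x` of a code below `N` can carry. -/
noncomputable def logVals (x N : ℕ) : ℝ := Real.logb 2 (vals x N).card

theorem logVals_nonneg (x N : ℕ) : 0 ≤ logVals x N := by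
  rcases Nat.eq_zero_or_pos (vals x N).card with h | h
  · simp [logVals, h]
  · exact Real.logb_nonneg one_lt_two (by exact_mod_cast h)

theorem two_mul_logVals_le (x : ℕ) {N M : ℕ} (hN : 1 ≤ N) (hM : grow N ≤ M) :
    2 * logVals x N ≤ logVals x M := by
  have hpos : (0 : ℝ) < (vals x N).card := by exact_mod_cast card_vals_pos x hN
  have hcard : (vals x N).card ^ 2 ≤ (vals x M).card := by
    rw [pow_two, ← Finset.card_image₂ injective2_natPair]
    exact Finset.card_le_card ((image₂_vals_subset x N).trans (vals_mono x hM))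
  have hlog := Real.logb_le_logb_of_le (b := 2) one_lt_two (by positivity)
    (by exact_mod_cast hcard : ((vals x N).card : ℝ) ^ 2 ≤ (vals x M).card)
  rwa [Real.logb_pow, Nat.cast_two] at hlog

theorem monotone_of_grow_le {ν : ℕ → ℕ} (hν : ∀ i, grow (ν i) ≤ ν (i + 1)) : Monotone ν :=
  monotone_nat_of_le_succ fun i => (lt_grow _).le.trans (hν i)

theorem two_pow_mul_logVals_le {ν : ℕ → ℕ} (hν : ∀ i, grow (ν i) ≤ ν (i + 1)) (h0 : 1 ≤ ν 0)
    (x i : ℕ) : 2 ^ i * logVals x (ν 0) ≤ logVals x (ν i) := by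
  induction i with
  | zero => simp
  | succ i ih =>
    have hi : 1 ≤ ν i := h0.trans (monotone_of_grow_le hν i.zero_le)
    calc 2 ^ (i + 1) * logVals x (ν 0) = 2 * (2 ^ i * logVals x (ν 0)) := by ring
      _ ≤ 2 * logVals x (ν i) := by gcongr
      _ ≤ logVals x (ν (i + 1)) := two_mul_logVals_le x hi (hν i)

/-! ### Primitive recursive functions and short constants -/

section Primrec

variable {α : Type} [Primcodable α] {f g : α → ℕ}

theorem primrec_unpair_fst (hf : Primrec f) : Primrec fun x => (f x).unpair.1 :=
  Primrec.fst.comp (Primrec.unpair.comp hf)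

theorem primrec_unpair_snd (hf : Primrec f) : Primrec fun x => (f x).unpair.2 :=
  Primrec.snd.comp (Primrec.unpair.comp hf)

theorem primrec_pair (hf : Primrec f) (hg : Primrec g) : Primrec fun x => Nat.pair (f x) (g x) :=
  Primrec₂.natPair.comp hf hg

end Primrec

theorem exists_code_of_primrec {f : ℕ → ℕ} (hf : Primrec f) :
    ∃ c : Code, ∀ n, value c n = some (f n) := by
  obtain ⟨c, hc⟩ := Code.exists_code.1 (Nat.Partrec.of_primrec (Primrec.nat_iff.1 hf))
  exact ⟨c, fun n => value_eq_some_iff_eval.2 (by rw [hc]; rfl)⟩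

theorem exists_code_comp_primrec (c : Code) {f : ℕ → ℕ} (hf : Primrec f) :
    ∃ c' : Code, ∀ n, value c' n = value c (f n) := by
  obtain ⟨r, hr⟩ := exists_code_of_primrec hf
  exact ⟨Code.comp c r, fun n => by rw [value_comp, hr, Option.bind_some]⟩

/-- The code `e` has the constant value `w`. -/
def IsConst (e : Code) (w : ℕ) : Prop := ∀ s, value e s = some w

-- A pair of two `2 ^ k`-bit numbers is a `2 ^ (k + 1)`-bit number.
theorem exists_isConst_mem_codesBelow :
    ∃ B, ∀ k n, n < 2 ^ 2 ^ k → ∃ e ∈ codesBelow (grow^[k] B), IsConst e n := by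
  refine ⟨Encodable.encode (Code.const 0) + Encodable.encode (Code.const 1) + 1, fun k => ?_⟩
  induction k with
  | zero =>
    intro n hn
    refine ⟨Code.const n, mem_codesBelow.2 ?_, fun s =>
      value_eq_some_iff_eval.2 (Code.eval_const n s)⟩
    obtain rfl | rfl : n = 0 ∨ n = 1 := by omega
    all_goals rw [Function.iterate_zero_apply]; omega
  | succ k ih =>
    intro n hn
    rw [pow_succ, pow_mul, ← Nat.pair_unpair n, pair_lt_sq_iff] at hn
    obtain ⟨e, he, hec⟩ := ih _ hn.1
    obtain ⟨f, hf, hfc⟩ := ih _ hn.2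
    refine ⟨Code.pair e f, ?_, fun s => by simp [value_pair, hec s, hfc s]⟩
    rw [Function.iterate_succ_apply']
    exact pair_mem_codesBelow.2 ⟨he, hf⟩

/-! ### Codes that carry data -/

/-- The code `e` computes `c` while supplying it with the parameter `w` and the datum `z`. The
parameter is meant to be hard-coded and small, the datum to be nearly as long as `e` itself. -/
def Carries (e c : Code) (w z : ℕ) : Prop :=
  ∀ s, value e s = value c (Nat.pair w (Nat.pair s z))

/-- A code that asks `Y` one question about its input and computes with the answer without losing
the data carried by `e₁`, `e₂` and `e₃`: the third code prepares the question and the recursion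
depth, the second one keeps the answer during the recursion, the first one continues. -/
def queryCode (Y e₁ e₂ e₃ : Code) : Code := Code.comp e₁ (Code.comp (Code.prec Y e₂) e₃)

/-- What the third code of a query computes from `⟨w, ⟨s, z₃⟩⟩`: the question `f ⟨w, s⟩` and a
positive recursion depth from which `s` and `z₃` can be recovered. -/
def queryPrepare (f : ℕ → ℕ) (u : ℕ) : ℕ :=
  Nat.pair (f (Nat.pair u.unpair.1 u.unpair.2.unpair.1)) (u.unpair.2 + 1)

/-- What the second code of a query computes from `⟨w, ⟨⟨q, ⟨i, S⟩⟩, z₂⟩⟩`, where `S` is the answer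
for `i = 0` and a pair of the answer and `⟨i - 1, z₂⟩` otherwise. -/
def queryStep (u : ℕ) : ℕ :=
  let v := u.unpair.2.unpair.1.unpair.2
  Nat.pair (if v.unpair.1 = 0 then v.unpair.2 else v.unpair.2.unpair.1)
    (Nat.pair v.unpair.1 u.unpair.2.unpair.2)

/-- The arguments of the continuation of a query, computed from what its first code sees:
`⟨w, ⟨⟨y, ⟨⟨s, z₃⟩, z₂⟩⟩, z₁⟩⟩ ↦ ⟨w, ⟨s, ⟨z₁, ⟨z₃, ⟨y, z₂⟩⟩⟩⟩⟩`. -/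
def queryCollect (u : ℕ) : ℕ :=
  let v := u.unpair.2.unpair.1
  let sz := v.unpair.2.unpair.1
  Nat.pair u.unpair.1 (Nat.pair sz.unpair.1 (Nat.pair u.unpair.2.unpair.2
    (Nat.pair sz.unpair.2 (Nat.pair v.unpair.1 v.unpair.2.unpair.2))))

theorem primrec_queryPrepare {f : ℕ → ℕ} (hf : Primrec f) : Primrec (queryPrepare f) :=
  have h := primrec_unpair_snd Primrec.id
  primrec_pair (hf.comp (primrec_pair (primrec_unpair_fst Primrec.id) (primrec_unpair_fst h)))
    (Primrec.succ.comp h)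

theorem primrec_queryStep : Primrec queryStep :=
  have h := primrec_unpair_snd Primrec.id
  have hv := primrec_unpair_snd (primrec_unpair_fst h)
  primrec_pair (Primrec.ite (Primrec.eq.comp (primrec_unpair_fst hv) (Primrec.const 0))
      (primrec_unpair_snd hv) (primrec_unpair_fst (primrec_unpair_snd hv)))
    (primrec_pair (primrec_unpair_fst hv) (primrec_unpair_snd h))

theorem primrec_queryCollect : Primrec queryCollect :=
  have h := primrec_unpair_snd Primrec.id
  have hv := primrec_unpair_fst h
  have hsz := primrec_unpair_fst (primrec_unpair_snd hv)
  primrec_pair (primrec_unpair_fst Primrec.id) (primrec_pair (primrec_unpair_fst hsz)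
    (primrec_pair (primrec_unpair_snd h) (primrec_pair (primrec_unpair_snd hsz)
      (primrec_pair (primrec_unpair_fst hv) (primrec_unpair_snd (primrec_unpair_snd hv))))))

theorem value_prec_of_carries_queryStep {Y e c₂ : Code} {w z q y : ℕ}
    (hc : ∀ u, value c₂ u = some (queryStep u)) (he : Carries e c₂ w z)
    (hY : value Y q = some y) (i : ℕ) :
    value (Code.prec Y e) (Nat.pair q (i + 1)) = some (Nat.pair y (Nat.pair i z)) := by
  induction i with
  | zero => simp [value_prec_succ, value_prec_zero, hY, he _, hc, queryStep]
  | succ i ih => rw [value_prec_succ, ih]; simp [he _, hc, queryStep]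

theorem exists_query (c : Code) {f : ℕ → ℕ} (hf : Primrec f) :
    ∃ c₁ c₂ c₃ : Code, ∀ {Y e₁ e₂ e₃ : Code} {w z₁ z₂ z₃ : ℕ},
      Carries e₁ c₁ w z₁ → Carries e₂ c₂ w z₂ → Carries e₃ c₃ w z₃ →
      ∀ {s y : ℕ}, value Y (f (Nat.pair w s)) = some y →
        value (queryCode Y e₁ e₂ e₃) s = value c (Nat.pair w (Nat.pair s
          (Nat.pair z₁ (Nat.pair z₃ (Nat.pair y z₂))))) := by
  obtain ⟨c₁, hc₁⟩ := exists_code_comp_primrec c primrec_queryCollect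
  obtain ⟨c₂, hc₂⟩ := exists_code_of_primrec primrec_queryStep
  obtain ⟨c₃, hc₃⟩ := exists_code_of_primrec (primrec_queryPrepare hf)
  refine ⟨c₁, c₂, c₃, fun h₁ h₂ h₃ s y hY => ?_⟩
  simp [queryCode, value_comp, h₃ s, hc₃, queryPrepare,
    value_prec_of_carries_queryStep hc₂ h₂ hY, h₁ _, hc₁, queryCollect]

theorem queryCode_mem_codesBelow {ν : ℕ → ℕ} (hν : ∀ i, grow (ν i) ≤ ν (i + 1)) {j : ℕ}
    {Y e₁ e₂ e₃ : Code} (hY : Y ∈ codesBelow (ν j)) (h₁ : e₁ ∈ codesBelow (ν (j + 2)))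
    (h₂ : e₂ ∈ codesBelow (ν j)) (h₃ : e₃ ∈ codesBelow (ν (j + 1))) :
    queryCode Y e₁ e₂ e₃ ∈ codesBelow (ν (j + 3)) :=
  have hprec := codesBelow_mono (hν j) (prec_mem_codesBelow.2 ⟨hY, h₂⟩)
  have hcomp := codesBelow_mono (hν (j + 1)) (comp_mem_codesBelow.2 ⟨hprec, h₃⟩)
  codesBelow_mono (hν (j + 2)) (comp_mem_codesBelow.2 ⟨h₁, hcomp⟩)

/-- The data that codes below `ν j` can carry if they may hard-code the point `x`: those of three
smaller carriers and the answer of a code below `ν j` to the question `x`. -/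
noncomputable def holds (ν : ℕ → ℕ) (x : ℕ) : ℕ → Finset ℕ
  | 0 | 1 | 2 => {0}
  | j + 3 => Finset.image₂ Nat.pair (holds ν x (j + 2)) (Finset.image₂ Nat.pair (holds ν x (j + 1))
      (Finset.image₂ Nat.pair (vals x (ν j)) (holds ν x j)))

theorem exists_carries_zero (c : Code) :
    ∃ B, ∀ {N w : ℕ}, B ≤ N → (∃ e ∈ codesBelow N, IsConst e w) →
      ∃ e ∈ codesBelow (grow (grow N)), Carries e c w 0 := by
  obtain ⟨c', hc'⟩ := exists_code_comp_primrec c (f := fun u =>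
    Nat.pair u.unpair.1 (Nat.pair u.unpair.2 0))
    (primrec_pair (primrec_unpair_fst Primrec.id)
      (primrec_pair (primrec_unpair_snd Primrec.id) (Primrec.const 0)))
  refine ⟨Encodable.encode c' + Encodable.encode Code.id + 1, fun {N w} hN ⟨e, he, hew⟩ => ?_⟩
  refine ⟨Code.comp c' (Code.pair e Code.id), comp_mem_codesBelow.2
    ⟨codesBelow_mono (lt_grow N).le (mem_codesBelow.2 (by omega)),
      pair_mem_codesBelow.2 ⟨he, mem_codesBelow.2 (by omega)⟩⟩, fun s => ?_⟩
  have hid : value Code.id s = some s := value_eq_some_iff_eval.2 (Code.eval_id s)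
  simp [value_comp, value_pair, hew s, hid, hc']

theorem exists_carries (c : Code) (j : ℕ) :
    ∃ B, ∀ {ν : ℕ → ℕ}, (∀ i, grow (ν i) ≤ ν (i + 1)) → ∀ {N w : ℕ}, B ≤ N →
      grow (grow N) ≤ ν 0 → (∃ e ∈ codesBelow N, IsConst e w) →
      ∀ z ∈ holds ν w.unpair.1 j, ∃ e ∈ codesBelow (ν j), Carries e c w z := by
  induction j using Nat.strong_induction_on generalizing c with
  | _ j ih =>
    match j, ih with
    | 0, _ | 1, _ | 2, _ =>
      obtain ⟨B, hB⟩ := exists_carries_zero c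
      refine ⟨B, fun {ν} hν N w hN hν0 hw z hz => ?_⟩
      obtain ⟨e, he, hew⟩ := hB hN hw
      rw [Finset.mem_singleton.1 hz]
      exact ⟨e, codesBelow_mono (hν0.trans (monotone_of_grow_le hν (Nat.zero_le _))) he, hew⟩
    | j + 3, ih =>
      obtain ⟨c₁, c₂, c₃, hquery⟩ := exists_query c
        (f := fun u => u.unpair.1.unpair.1) (primrec_unpair_fst (primrec_unpair_fst Primrec.id))
      obtain ⟨B₁, h₁⟩ := ih (j + 2) (by omega) c₁
      obtain ⟨B₂, h₂⟩ := ih j (by omega) c₂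
      obtain ⟨B₃, h₃⟩ := ih (j + 1) (by omega) c₃
      refine ⟨max B₁ (max B₂ B₃), fun hν N w hN hν0 hw z hz => ?_⟩
      simp only [max_le_iff] at hN
      simp only [holds, Finset.mem_image₂] at hz
      obtain ⟨z₁, hz₁, _, ⟨z₃, hz₃, _, ⟨y, hy, z₂, hz₂, rfl⟩, rfl⟩, rfl⟩ := hz
      obtain ⟨e₁, he₁, hc₁⟩ := h₁ hν hN.1 hν0 hw z₁ hz₁
      obtain ⟨e₂, he₂, hc₂⟩ := h₂ hν hN.2.1 hν0 hw z₂ hz₂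
      obtain ⟨e₃, he₃, hc₃⟩ := h₃ hν hN.2.2 hν0 hw z₃ hz₃
      obtain ⟨Y, hYmem, hY⟩ := mem_vals.1 hy
      exact ⟨queryCode Y e₁ e₂ e₃, queryCode_mem_codesBelow hν hYmem he₁ he₂ he₃,
        fun s => hquery hc₁ hc₂ hc₃ (by rwa [Nat.unpair_pair])⟩

theorem card_holds_pos {ν : ℕ → ℕ} (hν : ∀ i, 1 ≤ ν i) (x j : ℕ) : 0 < (holds ν x j).card := by
  induction j using Nat.strong_induction_on with
  | _ j ih =>
    match j, ih with
    | 0, _ | 1, _ | 2, _ => exact Nat.one_pos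
    | j + 3, ih =>
      simp only [holds, Finset.card_image₂ injective2_natPair]
      have := ih j (by omega)
      have := ih (j + 1) (by omega)
      have := ih (j + 2) (by omega)
      have := card_vals_pos x (hν j)
      positivity

/-- The number of bits that a code below `ν j` can carry. -/
noncomputable def logHolds (ν : ℕ → ℕ) (x j : ℕ) : ℝ := Real.logb 2 (holds ν x j).card

theorem logHolds_add_three {ν : ℕ → ℕ} (hν : ∀ i, 1 ≤ ν i) (x j : ℕ) :
    logHolds ν x (j + 3) =
      logHolds ν x (j + 2) + (logHolds ν x (j + 1) + (logVals x (ν j) + logHolds ν x j)) := by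
  have hne (i : ℕ) : ((holds ν x i).card : ℝ) ≠ 0 := by exact_mod_cast (card_holds_pos hν x i).ne'
  have hvals : ((vals x (ν j)).card : ℝ) ≠ 0 := by exact_mod_cast (card_vals_pos x (hν j)).ne'
  rw [logHolds, holds]
  simp only [Finset.card_image₂ injective2_natPair, Nat.cast_mul]
  rw [Real.logb_mul (hne _) (mul_ne_zero (hne _) (mul_ne_zero hvals (hne _))),
    Real.logb_mul (hne _) (mul_ne_zero hvals (hne _)), Real.logb_mul hvals (hne _)]
  rfl

-- With `r = 15 / 8`, the loss `2 * r ^ j` survives the recursion since `r ^ 2 + r + 1 ≤ r ^ 3`.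
theorem sub_mul_logVals_le_logHolds {ν : ℕ → ℕ} (hν : ∀ i, grow (ν i) ≤ ν (i + 1))
    (h0 : 1 ≤ ν 0) (x j : ℕ) :
    (2 ^ j - 2 * (15 / 8) ^ j) * logVals x (ν 0) ≤ logHolds ν x j := by
  have hν1 (i : ℕ) : 1 ≤ ν i := h0.trans (monotone_of_grow_le hν i.zero_le)
  have ht := logVals_nonneg x (ν 0)
  induction j using Nat.strong_induction_on with
  | _ j ih =>
    match j, ih with
    | 0, _ | 1, _ | 2, _ =>
      simp only [logHolds, holds, Finset.card_singleton, Nat.cast_one, Real.logb_one]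
      exact mul_nonpos_of_nonpos_of_nonneg (by norm_num) ht
    | j + 3, ih =>
      have hr : (0 : ℝ) ≤ (15 / 8) ^ j * logVals x (ν 0) := by positivity
      have hvals := two_pow_mul_logVals_le hν h0 x j
      have ih₀ := ih j (by omega)
      have ih₁ := ih (j + 1) (by omega)
      have ih₂ := ih (j + 2) (by omega)
      rw [logHolds_add_three hν1]
      simp only [pow_succ] at ih₁ ih₂ ⊢
      linarith

theorem exists_mul_logVals_le_logHolds {θ : ℝ} (hθ : θ < 1) :
    ∃ J, ∀ {ν : ℕ → ℕ}, (∀ i, grow (ν i) ≤ ν (i + 1)) → 1 ≤ ν 0 → ∀ x, ∀ j ≥ J,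
      θ * (2 ^ j * logVals x (ν 0)) ≤ logHolds ν x j := by
  obtain ⟨J, hJ⟩ := exists_pow_lt_of_lt_one (show 0 < (1 - θ) / 2 by linarith)
    (show (15 / 16 : ℝ) < 1 by norm_num)
  refine ⟨J, fun {ν} hν h0 x j hj => ?_⟩
  have hpow : ((15 : ℝ) / 16) ^ j ≤ (1 - θ) / 2 :=
    (pow_le_pow_of_le_one (by norm_num) (by norm_num) hj).trans hJ.le
  have hfactor : θ * 2 ^ j ≤ 2 ^ j - 2 * (15 / 8) ^ j := by
    rw [show (15 / 8 : ℝ) = 15 / 16 * 2 by norm_num, mul_pow]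
    nlinarith [pow_pos (zero_lt_two' ℝ) j]
  calc θ * (2 ^ j * logVals x (ν 0)) = θ * 2 ^ j * logVals x (ν 0) := by ring
    _ ≤ (2 ^ j - 2 * (15 / 8) ^ j) * logVals x (ν 0) :=
        mul_le_mul_of_nonneg_right hfactor (logVals_nonneg _ _)
    _ ≤ logHolds ν x j := sub_mul_logVals_le_logHolds hν h0 x j

/-! ### Realizing the adaptive capacity at a single point -/

namespace QTree

variable {Q ι : Type}

/-- The rest of a tree after the first question has been answered by `y`. -/
def advance : QTree Q → ℕ → QTree Q
  | leaf o, _ => leaf o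
  | ask _ next, y => next y

/-- The rest of a tree after a list of answers, the latest answer being the head of the list. -/
def walk (t : QTree Q) (h : List ℕ) : QTree Q := h.foldr (fun y s => s.advance y) t

/-- The first question of a tree, with the default value `d` for leaves. -/
def question (d : Q) : QTree Q → Q
  | leaf _ => d
  | ask q _ => q

/-- The number at a leaf, with the junk value `0` for other trees. -/
def output : QTree Q → ℕ
  | leaf o => o
  | ask _ _ => 0

/-- The first `i` answers of an oracle to the strategy `σ`, which chooses the next question from the
previous answers; the latest answer comes first. -/
def transcript (f : Q → Option ℕ) (σ : List ℕ → Q) : ℕ → Option (List ℕ)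
  | 0 => some []
  | i + 1 => (transcript f σ i).bind fun h => (f (σ h)).map (· :: h)

/-- All transcripts of length `i` over a finite family of oracles. -/
noncomputable def transcripts (ans : ι → Q → Option ℕ) (F : Finset ι) (σ : List ℕ → Q) (i : ℕ) :
    Finset (List ℕ) :=
  F.biUnion fun e => (transcript (ans e) σ i).toFinset

theorem mem_transcripts {ans : ι → Q → Option ℕ} {F : Finset ι} {σ : List ℕ → Q} {i : ℕ}
    {h : List ℕ} : h ∈ transcripts ans F σ i ↔ ∃ e ∈ F, transcript (ans e) σ i = some h := by
  simp [transcripts]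

theorem transcript_succ_eq_some {f : Q → Option ℕ} {σ : List ℕ → Q} {i : ℕ} {h' : List ℕ} :
    transcript f σ (i + 1) = some h' ↔
      ∃ h y, transcript f σ i = some h ∧ f (σ h) = some y ∧ y :: h = h' := by
  simp [transcript, Option.bind_eq_some_iff]

theorem eventually_walk_eq_leaf {f : Q → Option ℕ} {t : QTree Q} {q : Q} {o y₀ : ℕ}
    (hq : f q = some y₀) (ht : t.run f = some o) :
    ∃ b, ∀ i ≥ b, ∃ h, transcript f (fun h => (t.walk h).question q) i = some h ∧
      t.walk h = leaf o := by
  suffices key : ∀ (s : QTree Q) (j : ℕ) (h : List ℕ), s.run f = some o → t.walk h = s →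
      transcript f (fun h => (t.walk h).question q) j = some h →
      ∃ b, ∀ i ≥ b, ∃ h, transcript f (fun h => (t.walk h).question q) i = some h ∧
        t.walk h = leaf o from
    key t 0 [] ht rfl rfl
  intro s
  induction s with
  | leaf o' =>
    intro j h hs hwalk htr
    obtain rfl : o' = o := Option.some.inj hs
    refine ⟨j, fun i hi => ?_⟩
    induction i, hi using Nat.le_induction with
    | base => exact ⟨h, htr, hwalk⟩
    | succ i _ ih =>
      obtain ⟨h, htr, hwalk⟩ := ih
      refine ⟨y₀ :: h, transcript_succ_eq_some.2 ⟨h, y₀, htr, ?_, rfl⟩, ?_⟩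
      · simpa [hwalk, question] using hq
      · exact congrArg (fun s => s.advance y₀) hwalk
  | ask q' next ih =>
    intro j h hs hwalk htr
    obtain ⟨y, hy, hnext⟩ := Option.bind_eq_some_iff.1 hs
    refine ih y (j + 1) (y :: h) hnext (congrArg (fun s => s.advance y) hwalk)
      (transcript_succ_eq_some.2 ⟨h, y, htr, ?_, rfl⟩)
    simpa [hwalk, question] using hy

theorem exists_cap_le_card_transcripts {ans : ι → Q → Option ℕ} {F : Finset ι}
    (hcap : 2 ≤ cap ans F) :
    ∃ σ m, cap ans F ≤ (transcripts ans F σ (m + 1)).card := by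
  obtain ⟨t, ht⟩ := exists_card_outs_eq_cap ans F
  rw [← ht] at hcap ⊢
  cases t with
  | leaf o =>
    have hone : (outs ans F (leaf o)).card ≤ 1 :=
      Finset.card_le_one_iff_subset_singleton.2 ⟨o, fun o' ho' => by
        obtain ⟨_, -, h⟩ := mem_outs.1 ho'
        exact Finset.mem_singleton.2 (Option.some.inj h).symm⟩
    omega
  | ask q next =>
    have hleaf (e : ι) : ∃ b, ∀ o, (ask q next).run (ans e) = some o → ∀ i ≥ b, ∃ h,
        transcript (ans e) (fun h => ((ask q next).walk h).question q) i = some h ∧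
          (ask q next).walk h = leaf o := by
      rcases hrun : (ask q next).run (ans e) with _ | o
      · exact ⟨0, by simp⟩
      · obtain ⟨y, hy, -⟩ := Option.bind_eq_some_iff.1 hrun
        obtain ⟨b, hb⟩ := eventually_walk_eq_leaf hy hrun
        exact ⟨b, fun o' ho' => by rwa [← Option.some.inj ho']⟩
    choose b hb using hleaf
    refine ⟨fun h => ((ask q next).walk h).question q, F.sup b, ?_⟩
    refine (Finset.card_le_card fun o ho => ?_).trans
      (Finset.card_image_le (f := fun h => ((ask q next).walk h).output))
    obtain ⟨e, he, hrun⟩ := mem_outs.1 ho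
    obtain ⟨h, htr, hwalk⟩ := hb e o hrun (F.sup b + 1) ((Finset.le_sup he).trans (Nat.le_succ _))
    exact Finset.mem_image.2 ⟨h, mem_transcripts.2 ⟨e, he, htr⟩, by simp [hwalk, output]⟩

end QTree

/-- The entry at `k` of the list with number `c`, with the junk value `0` outside the list. -/
def tableEntry (c k : ℕ) : ℕ := (Denumerable.ofNat (List ℕ) c).getD k 0

theorem exists_tableEntry_eq (g : ℕ → ℕ) (D : ℕ) : ∃ c, ∀ k < D, tableEntry c k = g k := by
  refine ⟨Encodable.encode ((List.range D).map g), fun k hk => ?_⟩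
  simp [tableEntry, List.getD, hk]

theorem primrec_tableEntry : Primrec₂ tableEntry :=
  (Primrec.list_getD 0).comp ((Primrec.ofNat (List ℕ)).comp Primrec.fst) Primrec.snd

theorem exists_table_strategy {ι : Type} (ans : ι → ℕ → Option ℕ) (F : Finset ι)
    (σ : List ℕ → ℕ) (m : ℕ) :
    ∃ a, ∀ i < m, ∀ h ∈ transcripts ans F σ i, tableEntry a (Encodable.encode h) = σ h := by
  obtain ⟨a, ha⟩ := exists_tableEntry_eq (fun k => σ (Denumerable.ofNat (List ℕ) k))
    (((Finset.range m).biUnion (transcripts ans F σ)).sup Encodable.encode + 1)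
  refine ⟨a, fun i hi h hh => ?_⟩
  rw [ha _ (Nat.lt_succ_of_le (Finset.le_sup
    (Finset.mem_biUnion.2 ⟨i, Finset.mem_range.2 hi, hh⟩))), Denumerable.ofNat_encode]

/-- The question looked up by a step of a strategy simulation: the input is `⟨w, ⟨a, ⟨i, S⟩⟩⟩` with
the table `a` of the strategy and the state `S = ⟨history, data⟩`. -/
def strategyQuestion (u : ℕ) : ℕ :=
  tableEntry u.unpair.2.unpair.1 u.unpair.2.unpair.2.unpair.2.unpair.1

/-- The state after a step of a strategy simulation, computed from what a query leaves behind,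
`⟨w, ⟨⟨a, ⟨i, S⟩⟩, ⟨z₁, ⟨z₃, ⟨y, z₂⟩⟩⟩⟩⟩`: the answer `y` is added to the history, and the carried
data are added to the state in the first step. -/
def strategyState (u : ℕ) : ℕ :=
  let i := u.unpair.2.unpair.1.unpair.2.unpair.1
  let S := u.unpair.2.unpair.1.unpair.2.unpair.2
  let z := u.unpair.2.unpair.2
  let y := z.unpair.2.unpair.2.unpair.1
  Nat.pair (Nat.pair y S.unpair.1 + 1) (if i = 0 then
    Nat.pair S.unpair.2 (Nat.pair z.unpair.1
      (Nat.pair z.unpair.2.unpair.1 z.unpair.2.unpair.2.unpair.2)) else S.unpair.2)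

theorem primrec_strategyQuestion : Primrec strategyQuestion :=
  have h := primrec_unpair_snd Primrec.id
  primrec_tableEntry.comp (primrec_unpair_fst h)
    (primrec_unpair_fst (primrec_unpair_snd (primrec_unpair_snd h)))

theorem primrec_strategyState : Primrec strategyState :=
  have h := primrec_unpair_snd Primrec.id
  have hiS := primrec_unpair_snd (primrec_unpair_fst h)
  have hS := primrec_unpair_snd hiS
  have hz := primrec_unpair_snd h
  have hz₂ := primrec_unpair_snd hz
  have hyz := primrec_unpair_snd hz₂
  primrec_pair
    (Primrec.succ.comp (primrec_pair (primrec_unpair_fst hyz) (primrec_unpair_fst hS)))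
    (Primrec.ite (Primrec.eq.comp (primrec_unpair_fst hiS) (Primrec.const 0))
      (primrec_pair (primrec_unpair_snd hS) (primrec_pair (primrec_unpair_fst hz)
        (primrec_pair (primrec_unpair_fst hz₂) (primrec_unpair_snd hyz))))
      (primrec_unpair_snd hS))

theorem exists_strategySimulation :
    ∃ c₀ c₁ c₂ c₃ : Code, ∀ {Y e₀ e₁ e₂ e₃ : Code} {w z₀ z₁ z₂ z₃ : ℕ},
      Carries e₀ c₀ w z₀ → Carries e₁ c₁ w z₁ → Carries e₂ c₂ w z₂ → Carries e₃ c₃ w z₃ →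
      ∀ {σ : List ℕ → ℕ} {a m : ℕ}, (∀ i < m + 1, ∀ h, transcript (value Y) σ i = some h →
        tableEntry a (Encodable.encode h) = σ h) →
      ∀ h, transcript (value Y) σ (m + 1) = some h →
        value (Code.prec e₀ (queryCode Y e₁ e₂ e₃)) (Nat.pair a (m + 1)) =
          some (Nat.pair (Encodable.encode h)
            (Nat.pair z₀ (Nat.pair z₁ (Nat.pair z₃ z₂)))) := by
  obtain ⟨c₀, hc₀⟩ := exists_code_of_primrec (f := fun u => Nat.pair 0 u.unpair.2.unpair.2)
    (primrec_pair (Primrec.const 0) (primrec_unpair_snd (primrec_unpair_snd Primrec.id)))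
  obtain ⟨c, hc⟩ := exists_code_of_primrec primrec_strategyState
  obtain ⟨c₁, c₂, c₃, hquery⟩ := exists_query c primrec_strategyQuestion
  refine ⟨c₀, c₁, c₂, c₃, fun {Y _ _ _ _ w _ _ _ _} h₀ h₁ h₂ h₃ σ a m htable h htr => ?_⟩
  have hstep {i y D : ℕ} {h : List ℕ} (hσ : tableEntry a (Encodable.encode h) = σ h)
      (hy : value Y (σ h) = some y) :=
    hquery h₁ h₂ h₃ (s := Nat.pair a (Nat.pair i (Nat.pair (Encodable.encode h) D))) (y := y)
      (by simpa [strategyQuestion, hσ] using hy)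
  induction m generalizing h with
  | zero =>
    obtain ⟨_, y, hnil, hy, rfl⟩ := transcript_succ_eq_some.1 htr
    obtain rfl := Option.some.inj hnil
    have hbase : Encodable.encode ([] : List ℕ) = 0 := rfl
    rw [value_prec_succ, value_prec_zero, h₀, hc₀, Option.bind_some]
    simp only [Nat.unpair_pair]
    rw [← hbase, hstep (htable 0 Nat.one_pos [] rfl) hy, hc]
    simp [strategyState]
  | succ m ih =>
    obtain ⟨h, y, hh, hy, rfl⟩ := transcript_succ_eq_some.1 htr
    rw [value_prec_succ, ih (fun i hi => htable i (by omega)) h hh, Option.bind_some,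
      hstep (htable (m + 1) (by omega) h hh) hy, hc]
    simp [strategyState]

theorem exists_mul_card_holds_le_card_vals (j : ℕ) :
    ∃ B, ∀ {ν : ℕ → ℕ}, (∀ i, grow (ν i) ≤ ν (i + 1)) → ∀ {N w : ℕ}, B ≤ N →
      grow (grow N) ≤ ν 0 → (∃ e ∈ codesBelow N, IsConst e w) → 2 ≤ codeCap (ν j) →
      ∃ x, codeCap (ν j) * ((holds ν w.unpair.1 (j + 3)).card *
        ((holds ν w.unpair.1 (j + 2)).card * ((holds ν w.unpair.1 (j + 1)).card *
          (holds ν w.unpair.1 j).card))) ≤ (vals x (ν (j + 4))).card := by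
  obtain ⟨c₀, c₁, c₂, c₃, hsim⟩ := exists_strategySimulation
  obtain ⟨B₀, h₀⟩ := exists_carries c₀ (j + 3)
  obtain ⟨B₁, h₁⟩ := exists_carries c₁ (j + 2)
  obtain ⟨B₂, h₂⟩ := exists_carries c₂ j
  obtain ⟨B₃, h₃⟩ := exists_carries c₃ (j + 1)
  refine ⟨max (max B₀ B₁) (max B₂ B₃), fun {ν} hν N w hN hν0 hw hcap => ?_⟩
  simp only [max_le_iff] at hN
  obtain ⟨σ, m, hσ⟩ := exists_cap_le_card_transcripts hcap
  obtain ⟨a, ha⟩ := exists_table_strategy value (codesBelow (ν j)) σ (m + 1)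
  refine ⟨Nat.pair a (m + 1), ?_⟩
  set H := (transcripts value (codesBelow (ν j)) σ (m + 1)).image Encodable.encode with hH
  have hcard : codeCap (ν j) ≤ H.card := by
    rwa [hH, Finset.card_image_of_injective _ Encodable.encode_injective]
  refine (Nat.mul_le_mul_right _ hcard).trans ?_
  simp only [← Finset.card_image₂ injective2_natPair]
  refine Finset.card_le_card (Finset.image₂_subset_iff.2 fun r hr z hz => ?_)
  simp only [Finset.mem_image₂] at hz
  obtain ⟨z₀, hz₀, _, ⟨z₁, hz₁, _, ⟨z₃, hz₃, z₂, hz₂, rfl⟩, rfl⟩, rfl⟩ := hz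
  obtain ⟨h, hh, rfl⟩ := Finset.mem_image.1 hr
  obtain ⟨Y, hY, htr⟩ := mem_transcripts.1 hh
  obtain ⟨e₀, he₀, hc₀⟩ := h₀ hν hN.1.1 hν0 hw z₀ hz₀
  obtain ⟨e₁, he₁, hc₁⟩ := h₁ hν hN.1.2 hν0 hw z₁ hz₁
  obtain ⟨e₂, he₂, hc₂⟩ := h₂ hν hN.2.1 hν0 hw z₂ hz₂
  obtain ⟨e₃, he₃, hc₃⟩ := h₃ hν hN.2.2 hν0 hw z₃ hz₃
  have htable : ∀ i < m + 1, ∀ h, transcript (value Y) σ i = some h →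
      tableEntry a (Encodable.encode h) = σ h :=
    fun i hi h hh => ha i hi h (mem_transcripts.2 ⟨Y, hY, hh⟩)
  exact mem_vals.2 ⟨Code.prec e₀ (queryCode Y e₁ e₂ e₃),
    codesBelow_mono (hν (j + 3))
      (prec_mem_codesBelow.2 ⟨he₀, queryCode_mem_codesBelow hν hY he₁ he₂ he₃⟩),
    hsim hc₀ hc₁ hc₂ hc₃ htable h htr⟩

theorem exists_add_logHolds_le_logVals (j : ℕ) :
    ∃ B, ∀ {ν : ℕ → ℕ}, (∀ i, grow (ν i) ≤ ν (i + 1)) → ∀ {N w : ℕ}, B ≤ N →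
      grow (grow N) ≤ ν 0 → (∃ e ∈ codesBelow N, IsConst e w) → 2 ≤ codeCap (ν j) →
      ∃ x, Real.logb 2 (codeCap (ν j)) + (logHolds ν w.unpair.1 (j + 3) +
        (logHolds ν w.unpair.1 (j + 2) + (logHolds ν w.unpair.1 (j + 1) +
          logHolds ν w.unpair.1 j))) ≤ logVals x (ν (j + 4)) := by
  obtain ⟨B, hB⟩ := exists_mul_card_holds_le_card_vals j
  refine ⟨B, fun {ν} hν {N w} hN hν0 hw hcap => ?_⟩
  obtain ⟨x, hx⟩ := hB hν hN hν0 hw hcap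
  have hν1 (i : ℕ) : 1 ≤ ν i :=
    ((Nat.zero_lt_of_lt (lt_grow _)).trans_le hν0).trans_le (monotone_of_grow_le hν i.zero_le)
  have hpos (i : ℕ) : (0 : ℝ) < (holds ν w.unpair.1 i).card := by
    exact_mod_cast card_holds_pos hν1 _ i
  have hne (i : ℕ) := (hpos i).ne'
  have hcap0 : (0 : ℝ) < codeCap (ν j) := by exact_mod_cast (by omega : 0 < codeCap (ν j))
  have hprod (i : ℕ) : (0 : ℝ) < (holds ν w.unpair.1 (i + 1)).card * (holds ν w.unpair.1 i).card :=
    mul_pos (hpos _) (hpos _)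
  refine ⟨x, ?_⟩
  simp only [logHolds, logVals]
  rw [← Real.logb_mul (hne _) (hne _), ← Real.logb_mul (hne _) (hprod _).ne',
    ← Real.logb_mul (hne _) (mul_pos (hpos _) (hprod _)).ne', ← Real.logb_mul hcap0.ne'
      (mul_pos (hpos _) (mul_pos (hpos _) (hprod _))).ne']
  exact Real.logb_le_logb_of_le one_lt_two
    (mul_pos hcap0 (mul_pos (hpos _) (mul_pos (hpos _) (hprod _)))) (by exact_mod_cast hx)

/-! ### Amplification -/

theorem card_vals_le_codeCap (x N : ℕ) : (vals x N).card ≤ codeCap N := by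
  refine (Finset.card_le_card fun v hv => ?_).trans (card_outs_le_cap value _ (ask x leaf))
  obtain ⟨e, he, hev⟩ := mem_vals.1 hv
  exact mem_outs.2 ⟨e, he, by simp [run, hev]⟩

theorem eventually_le_codeCap (m : ℕ) : ∀ᶠ N in Filter.atTop, m ≤ codeCap N := by
  refine Filter.eventually_atTop.2
    ⟨(Finset.range m).sup (fun i => Encodable.encode (Code.const i)) + 1, fun N hN => ?_⟩
  refine le_trans (le_of_eq_of_le (Finset.card_range m).symm (Finset.card_le_card fun i hi => ?_))
    (card_vals_le_codeCap 0 N)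
  exact mem_vals.2 ⟨Code.const i, mem_codesBelow.2 ((Nat.lt_succ_of_le
    (Finset.le_sup (f := fun i => Encodable.encode (Code.const i)) hi)).trans_le hN),
    value_eq_some_iff_eval.2 (Code.eval_const i 0)⟩

theorem eventually_mul_logCap_le_logb {θ : ℝ} (hθ : θ < 1) :
    ∀ᶠ N in Filter.atTop, θ * logCap N ≤ Real.logb 2 (codeCap N) := by
  obtain ⟨s, hs⟩ := exists_nat_ge (6 / (1 - θ))
  rw [div_le_iff₀ (by linarith)] at hs
  filter_upwards [eventually_le_codeCap (2 ^ s)] with N hN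
  have hlog := Real.logb_le_logb_of_le (b := 2) one_lt_two (by positivity)
    (by exact_mod_cast hN : (2 : ℝ) ^ s ≤ codeCap N)
  rw [Real.logb_pow, Real.logb_self_eq_one one_lt_two, mul_one] at hlog
  rw [logCap]
  nlinarith

/-- The rate `κ` is attained if, from some bound on, the codes below `N` have at least the
`κ`-th power of their adaptive capacity as values at a single point, which ranges over a fixed
finite set. -/
def IsAttained (κ : ℝ) : Prop :=
  ∃ X B, ∀ N ≥ B, ∃ x ≤ X, κ * logCap (N + 1) ≤ logVals x N

theorem isAttained_zero : IsAttained 0 :=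
  ⟨0, 0, fun N _ => ⟨0, le_rfl, by simpa using logVals_nonneg 0 N⟩⟩

theorem IsAttained.mono {κ κ' : ℝ} (h : IsAttained κ) (hκ : κ' ≤ κ) : IsAttained κ' := by
  obtain ⟨X, B, hB⟩ := h
  refine ⟨X, B, fun N hN => ?_⟩
  obtain ⟨x, hx, hle⟩ := hB N hN
  have hpos := six_le_logCap (Nat.le_add_left 1 N)
  exact ⟨x, hx, le_trans (by gcongr) hle⟩

-- When `N` is replaced by `grow N`, both sides of the inequality essentially double.
theorem isAttained_of_forall_exists {κ : ℝ} (hκ : 0 ≤ κ)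
    (h : ∃ B, ∀ N ≥ B, ∃ x, κ * logCap (N + 1) ≤ logVals x N) : IsAttained κ := by
  obtain ⟨B₀, hB₀⟩ := h
  set B := B₀ + 1
  choose! x hx using hB₀
  refine ⟨(Finset.range (grow B)).sup x, B, fun N => ?_⟩
  induction N using Nat.strong_induction_on with
  | _ N ih =>
    intro hN
    rcases lt_or_ge N (grow B) with hlt | hge
    · exact ⟨x N, Finset.le_sup (Finset.mem_range.2 hlt), hx N (by omega)⟩
    · have hN4 : 4 ≤ N := le_trans (Nat.le_add_left _ _) hge
      have hm : B ≤ root N := le_root hge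
      obtain ⟨y, hy, hle⟩ := ih _ (root_lt hN4) hm
      refine ⟨y, hy, ?_⟩
      calc κ * logCap (N + 1) ≤ κ * (2 * logCap (root N + 1)) := by
            gcongr
            exact (logCap_le_two_mul (by omega) (by omega) (lt_grow_root_succ N)).trans
              (by gcongr; exact logCap_le_of_le (by omega) (by omega))
        _ = 2 * (κ * logCap (root N + 1)) := by ring
        _ ≤ 2 * logVals y (root N) := by gcongr
        _ ≤ logVals y N := two_mul_logVals_le y (by omega) (grow_root_le hN4)

theorem exists_grow_le_chain (J B : ℕ) : ∃ B', ∀ N ≥ B', ∃ ν : ℕ → ℕ,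
    (∀ i, grow (ν i) ≤ ν (i + 1)) ∧ (∀ i, ν (i + 1) + 1 ≤ grow (ν i + 1)) ∧ ν J = N ∧ B ≤ ν 0 := by
  induction J generalizing B with
  | zero =>
    refine ⟨B, fun N hN => ⟨fun i => grow^[i] N, fun i => ?_, fun i => ?_, rfl, hN⟩⟩
    · exact (Function.iterate_succ_apply' grow i N).ge
    · simp only [Function.iterate_succ_apply']
      exact grow_strictMono (Nat.lt_succ_self _)
  | succ J ih =>
    obtain ⟨B', hB'⟩ := ih (grow B)
    refine ⟨B', fun N hN => ?_⟩
    obtain ⟨ν, hν, hν', hJ, h0⟩ := hB' N hN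
    refine ⟨fun i => i.casesOn (root (ν 0)) ν, fun i => ?_, fun i => ?_, hJ, le_root h0⟩
    · cases i with
      | zero => exact grow_root_le (le_trans (Nat.le_add_left _ _) h0)
      | succ i => exact hν i
    · cases i with
      | zero => exact lt_grow_root_succ _
      | succ i => exact hν' i

theorem logCap_succ_le_two_pow_mul {ν : ℕ → ℕ} (hν : ∀ i, ν (i + 1) + 1 ≤ grow (ν i + 1))
    (h1 : ∀ i, 1 ≤ ν i) (i k : ℕ) :
    logCap (ν (i + (k + 1)) + 1) ≤ 2 ^ (k + 1) * logCap (ν i) := by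
  have hstep (i : ℕ) : logCap (ν (i + 1) + 1) ≤ 2 * logCap (ν i) :=
    logCap_le_two_mul (h1 i) (Nat.le_add_left 1 _) (hν i)
  induction k with
  | zero => simpa using hstep i
  | succ k ih =>
    have hle := logCap_le_of_le (h1 (i + (k + 1))) (Nat.le_succ _)
    have hnext := hstep (i + (k + 1))
    calc logCap (ν (i + (k + 1 + 1)) + 1) ≤ 2 * logCap (ν (i + (k + 1)) + 1) := by
          rw [← add_assoc i (k + 1) 1]; linarith
      _ ≤ 2 * (2 ^ (k + 1) * logCap (ν i)) := by gcongr
      _ = 2 ^ (k + 1 + 1) * logCap (ν i) := by ring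

theorem mul_logCap_succ_le_two_pow_mul {ν : ℕ → ℕ} (hν : ∀ i, ν (i + 1) + 1 ≤ grow (ν i + 1))
    (h1 : ∀ i, 1 ≤ ν i) {κ L : ℝ} (hκ : 0 ≤ κ) (h0 : κ * logCap (ν 0 + 1) ≤ L) (k : ℕ) :
    κ * logCap (ν (k + 1) + 1) ≤ 2 ^ (k + 1) * L := by
  have hcap : logCap (ν (k + 1) + 1) ≤ 2 ^ (k + 1) * logCap (ν 0 + 1) := by
    have hle := logCap_succ_le_two_pow_mul hν h1 0 k
    rw [zero_add] at hle
    exact hle.trans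
      (mul_le_mul_of_nonneg_left (logCap_le_of_le (h1 0) (Nat.le_succ _)) (by positivity))
  calc κ * logCap (ν (k + 1) + 1) ≤ κ * (2 ^ (k + 1) * logCap (ν 0 + 1)) := by gcongr
    _ = 2 ^ (k + 1) * (κ * logCap (ν 0 + 1)) := by ring
    _ ≤ 2 ^ (k + 1) * L := by gcongr

theorem exists_isConst_pair_mem_codesBelow (X : ℕ) :
    ∃ N, ∀ x ≤ X, ∃ e ∈ codesBelow N, IsConst e (Nat.pair x 0) := by
  let n (x : ℕ) : ℕ := Encodable.encode (Code.const (Nat.pair x 0))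
  refine ⟨(Finset.range (X + 1)).sup n + 1, fun x hx => ⟨Code.const (Nat.pair x 0), ?_, fun s =>
    value_eq_some_iff_eval.2 (Code.eval_const _ s)⟩⟩
  exact mem_codesBelow.2 (Nat.lt_succ_of_le
    (Finset.le_sup (f := n) (Finset.mem_range.2 (Nat.lt_succ_of_le hx))))

-- Out of `16 = 8 + 4 + 2 + 1 + 1` parts of the length of a code, the carried data use `15` at the
-- rate `κ`, and the code that is asked questions uses the remaining one at its full capacity.
theorem IsAttained.amplify {κ θ : ℝ} (hκ : 0 ≤ κ) (hθ0 : 0 ≤ θ) (hθ1 : θ < 1)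
    (h : IsAttained κ) : IsAttained (θ * (15 * κ + 1) / 16) := by
  refine isAttained_of_forall_exists (by positivity) ?_
  obtain ⟨X, B₁, h₁⟩ := h
  obtain ⟨J, hJ⟩ := exists_mul_logVals_le_logHolds hθ1
  obtain ⟨B₂, h₂⟩ := exists_add_logHolds_le_logVals J
  obtain ⟨N₀, h₀⟩ := exists_isConst_pair_mem_codesBelow X
  obtain ⟨B₃, h₃⟩ := Filter.eventually_atTop.1
    ((eventually_mul_logCap_le_logb hθ1).and (eventually_le_codeCap 2))
  set M := max B₂ N₀
  obtain ⟨B, hB⟩ := exists_grow_le_chain (J + 4) (max (grow (grow M)) (max B₁ B₃))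
  refine ⟨B, fun N hN => ?_⟩
  obtain ⟨ν, hν, hν', hνN, hν0⟩ := hB N hN
  simp only [max_le_iff] at hν0
  have hν1 : 1 ≤ ν 0 := (Nat.zero_lt_of_lt (lt_grow _)).trans_le hν0.1
  have hνi (i : ℕ) : ν 0 ≤ ν i := monotone_of_grow_le hν i.zero_le
  obtain ⟨x, hxX, hx⟩ := h₁ (ν 0) hν0.2.1
  obtain ⟨e, he, hew⟩ := h₀ x hxX
  obtain ⟨hcap, hcap2⟩ := h₃ (ν J) (hν0.2.2.trans (hνi J))
  obtain ⟨y, hy⟩ := h₂ hν (le_max_left _ _) hν0.1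
    ⟨e, codesBelow_mono (le_max_right _ _) he, hew⟩ hcap2
  refine ⟨y, ?_⟩
  rw [Nat.unpair_pair] at hy
  have hνi1 (i : ℕ) : 1 ≤ ν i := hν1.trans (hνi i)
  rw [hνN] at hy
  have hquery : logCap (N + 1) ≤ 2 ^ 4 * logCap (ν J) :=
    hνN ▸ logCap_succ_le_two_pow_mul hν' hνi1 J 3
  have hcarry : κ * logCap (N + 1) ≤ 2 ^ (J + 4) * logVals x (ν 0) :=
    hνN ▸ mul_logCap_succ_le_two_pow_mul hν' hνi1 hκ hx (J + 3)
  have hholds (i : ℕ) : θ * (2 ^ (J + i) * logVals x (ν 0)) ≤ logHolds ν x (J + i) :=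
    hJ hν hν1 x (J + i) (Nat.le_add_right _ _)
  have h0 := hholds 0; have h1 := hholds 1; have h2 := hholds 2; have h3 := hholds 3
  simp only [pow_add, add_zero] at h0 h1 h2 h3
  calc θ * (15 * κ + 1) / 16 * logCap (N + 1)
      = 15 / 16 * θ * (κ * logCap (N + 1)) + θ / 16 * logCap (N + 1) := by ring
    _ ≤ 15 / 16 * θ * (2 ^ (J + 4) * logVals x (ν 0)) + θ / 16 * (2 ^ 4 * logCap (ν J)) := by
        gcongr
    _ ≤ logVals y N := by rw [pow_add]; linarith

theorem isAttained_of_lt_one {τ : ℝ} (h0 : 0 ≤ τ) (h1 : τ < 1) : IsAttained τ := by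
  set δ := (1 - τ) / 32 with hδ
  have hmin (n : ℕ) : IsAttained (min τ (n * δ)) := by
    induction n with
    | zero => exact isAttained_zero.mono (by simp)
    | succ n ih =>
      have hτ := min_le_left τ (n * δ)
      have hκ : 0 ≤ min τ (n * δ) := le_min h0 (mul_nonneg n.cast_nonneg (by linarith))
      refine (ih.amplify hκ (θ := 1 - δ) (by linarith) (by linarith)).mono ?_
      have hgain : min τ (n * δ) + δ ≤ (1 - δ) * (15 * min τ (n * δ) + 1) / 16 := by nlinarith
      refine le_trans ?_ hgain
      push_cast
      rw [add_one_mul, ← min_add_add_right]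
      exact min_le_min_right _ (by linarith)
  obtain ⟨n, hn⟩ := exists_nat_ge (τ / δ)
  rw [div_le_iff₀ (by linarith)] at hn
  exact (hmin n).mono (le_min le_rfl hn)

/-! ### Matching two enumerations -/

theorem exists_code_find {S : ℕ → ℕ → Prop} (hS : PrimrecRel S) :
    ∃ c : Code, ∀ v w, S v w → ∃ w', IsLeast {w | S v w} w' ∧ value c v = some w' := by
  classical
  have hdecide : Computable₂ fun v w : ℕ => decide (S v w) := hS.decide.to_comp
  obtain ⟨c, hc⟩ := Code.exists_code.1 (Partrec.nat_iff.1 (Partrec.rfind hdecide.partrec₂))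
  refine ⟨c, fun v w hw => ?_⟩
  have hex : ∃ w, S v w := ⟨w, hw⟩
  refine ⟨Nat.find hex, ⟨Nat.find_spec hex, fun i hi => Nat.find_min' hex hi⟩, ?_⟩
  rw [value_eq_some, hc]
  refine Nat.mem_rfind.2 ⟨?_, fun {i} hi => ?_⟩
  · simpa using Nat.find_spec hex
  · simpa using Nat.find_min hex hi

/-- The relation `R` enumerates `A` at the parameter `p`: `R p ⟨s, z⟩` means that `z` is listed at
stage `s`. -/
def Enumerates (R : ℕ → ℕ → Prop) (p : ℕ) (A : Finset ℕ) : Prop :=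
  ∀ z, z ∈ A ↔ ∃ s, R p (Nat.pair s z)

/-- The index `u = ⟨s, z⟩` is the first one that lists `z`. -/
def Fresh (R : ℕ → ℕ → Prop) (p u : ℕ) : Prop :=
  R p u ∧ ¬ ∃ u' < u, R p u' ∧ u'.unpair.2 = u.unpair.2

open Classical in
/-- The position, among the listed elements, of the element listed first at `u`. -/
noncomputable def rank (R : ℕ → ℕ → Prop) (p u : ℕ) : ℕ := Nat.count (Fresh R p) u

theorem primrecPred_exists_lt {α : Type} [Primcodable α] {R : ℕ → α → Prop} (hR : PrimrecRel R)
    {f : α → ℕ} (hf : Primrec f) : PrimrecPred fun v => ∃ i < f v, R i v := by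
  have hid : Primrec fun v : α => v := Primrec.id
  exact (hR.exists_mem_list.comp (Primrec.list_range.comp hf) hid).of_eq fun v => by
    simp only [List.mem_range]

section Matching

variable {R R' : ℕ → ℕ → Prop} {p : ℕ} {A : Finset ℕ}

theorem primrecRel_fresh (hR : PrimrecRel R) : PrimrecRel (Fresh R) := by
  have hlisted : PrimrecRel fun (u' : ℕ) (v : ℕ × ℕ) => R v.1 u' ∧ u'.unpair.2 = v.2.unpair.2 :=
    (hR.comp (Primrec.fst.comp Primrec.snd) Primrec.fst).and
      (Primrec.eq.comp (primrec_unpair_snd Primrec.fst)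
        (primrec_unpair_snd (Primrec.snd.comp Primrec.snd)))
  exact (hR.comp Primrec.fst Primrec.snd).and (primrecPred_exists_lt hlisted Primrec.snd).not

theorem primrec_rank (hR : PrimrecRel R) : Primrec₂ (rank R) := by
  classical
  have hfresh : PrimrecRel fun u p => Fresh R p u :=
    (primrecRel_fresh hR).comp Primrec.snd Primrec.fst
  have hcount : Primrec fun v : ℕ × ℕ => ((List.range v.2).filter (Fresh R v.1 ·)).length :=
    Primrec.list_length.comp (hfresh.listFilter.comp (Primrec.list_range.comp Primrec.snd)
      Primrec.fst)
  exact hcount.of_eq fun v => by simp only [rank, Nat.count, List.countP_eq_length_filter]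

theorem Enumerates.bijOn_fresh (hA : Enumerates R p A) :
    Set.BijOn (fun u => u.unpair.2) (Set.ofPred (Fresh R p)) A := by
  classical
  refine ⟨fun u hu => (hA _).2 ⟨u.unpair.1, ?_⟩, fun u hu v hv h => ?_, fun z hz => ?_⟩
  · rw [Nat.pair_unpair]
    exact hu.1
  · rcases lt_trichotomy u v with hlt | heq | hlt
    · exact (hv.2 ⟨u, hlt, hu.1, h⟩).elim
    · exact heq
    · exact (hu.2 ⟨v, hlt, hv.1, h.symm⟩).elim
  · obtain ⟨s, hs⟩ := (hA z).1 hz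
    have hex : ∃ u, R p u ∧ u.unpair.2 = z := ⟨_, hs, by simp⟩
    obtain ⟨hlisted, hz⟩ := Nat.find_spec hex
    exact ⟨Nat.find hex, ⟨hlisted, fun ⟨u, hu, h⟩ => Nat.find_min hex hu ⟨h.1, h.2.trans hz⟩⟩, hz⟩

theorem Enumerates.exists_finite_fresh (hA : Enumerates R p A) :
    ∃ h : (Set.ofPred (Fresh R p)).Finite, h.toFinset.card = A.card := by
  have hfin := hA.bijOn_fresh.finite_iff_finite.2 A.finite_toSet
  refine ⟨hfin, ?_⟩
  rw [← Set.ncard_eq_toFinset_card _ hfin, hA.bijOn_fresh.ncard_eq, Set.ncard_coe_finset]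

theorem Enumerates.rank_lt_card (hA : Enumerates R p A) {u : ℕ} (hu : Fresh R p u) :
    rank R p u < A.card := by
  classical
  obtain ⟨hfin, hcard⟩ := hA.exists_finite_fresh
  exact hcard ▸ Nat.count_lt_card hfin hu

theorem Enumerates.exists_rank_eq (hA : Enumerates R p A) {k : ℕ} (hk : k < A.card) :
    ∃ u, Fresh R p u ∧ rank R p u = k := by
  classical
  obtain ⟨hfin, hcard⟩ := hA.exists_finite_fresh
  rw [← hcard] at hk
  exact ⟨_, Nat.nth_mem_of_lt_card hfin hk, Nat.count_nth_of_lt_card_finite hfin hk⟩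

/-- The elements listed first at `u` and at `u'` by the two relations correspond to each other. -/
def Matched (R R' : ℕ → ℕ → Prop) (p u u' : ℕ) : Prop :=
  Fresh R p u ∧ Fresh R' p u' ∧ rank R p u = rank R' p u'

theorem Matched.right_unique {u u₁ u₂ : ℕ} (h₁ : Matched R R' p u u₁)
    (h₂ : Matched R R' p u u₂) : u₁ = u₂ := by
  classical
  exact Nat.count_injective h₁.2.1 h₂.2.1 (h₁.2.2.symm.trans h₂.2.2)

theorem exists_code_surjOn (hR : PrimrecRel R) (hR' : PrimrecRel R') :
    ∃ c : Code, ∀ {p : ℕ} {A B : Finset ℕ}, Enumerates R p A → Enumerates R' p B →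
      B.card ≤ A.card → ∀ b ∈ B, ∃ z ∈ A, value c (Nat.pair p z) = some b := by
  have hsearch : PrimrecRel fun v w : ℕ =>
      Matched R R' v.unpair.1 w.unpair.1 w.unpair.2 ∧ w.unpair.1.unpair.2 = v.unpair.2 := by
    have hp := primrec_unpair_fst (α := ℕ × ℕ) Primrec.fst
    have hu := primrec_unpair_fst (α := ℕ × ℕ) Primrec.snd
    have hu' := primrec_unpair_snd (α := ℕ × ℕ) Primrec.snd
    exact (((primrecRel_fresh hR).comp hp hu).and (((primrecRel_fresh hR').comp hp hu').and
      (Primrec.eq.comp ((primrec_rank hR).comp hp hu) ((primrec_rank hR').comp hp hu')))).and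
      (Primrec.eq.comp (primrec_unpair_snd hu) (primrec_unpair_snd Primrec.fst))
  obtain ⟨F, hF⟩ := exists_code_find hsearch
  obtain ⟨r, hr⟩ := exists_code_of_primrec
    (primrec_unpair_snd (primrec_unpair_snd (Primrec.id (α := ℕ))))
  refine ⟨Code.comp r F, fun {p A B} hA hB hle b hb => ?_⟩
  obtain ⟨u', hu', rfl⟩ := hB.bijOn_fresh.surjOn hb
  obtain ⟨u, hu, hrank⟩ := hA.exists_rank_eq ((hB.rank_lt_card hu').trans_le hle)
  have hmatched : Matched R R' p u u' := ⟨hu, hu', hrank⟩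
  refine ⟨u.unpair.2, hA.bijOn_fresh.mapsTo hu, ?_⟩
  obtain ⟨w, ⟨⟨hw, hwu⟩, -⟩, hvalue⟩ := hF (Nat.pair p u.unpair.2) (Nat.pair u u')
    (by simpa using hmatched)
  simp only [Nat.unpair_pair] at hw hwu
  have hw₁ : w.unpair.1 = u := hA.bijOn_fresh.injOn hw.1 hu hwu
  have hw₂ : w.unpair.2 = u' := (hw₁ ▸ hw).right_unique hmatched
  rw [value_comp, hvalue, Option.bind_some, hr, id, hw₂]

end Matching

/-! ### Enumerating what short codes can carry -/

/-- Some code below `N` outputs `y` on the input `x` within `s` steps. -/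
def ValsWithin (N x s y : ℕ) : Prop :=
  ∃ e < N, Code.evaln s (Denumerable.ofNat Code e) x = some y

/-- The elements of `holds ν x j` that are found within `s` steps. -/
def HoldsWithin (ν : ℕ → ℕ) (x s : ℕ) : ℕ → ℕ → Prop
  | 0, z | 1, z | 2, z => z = 0
  | j + 3, z => HoldsWithin ν x s (j + 2) z.unpair.1 ∧
      HoldsWithin ν x s (j + 1) z.unpair.2.unpair.1 ∧
      ValsWithin (ν j) x s z.unpair.2.unpair.2.unpair.1 ∧
      HoldsWithin ν x s j z.unpair.2.unpair.2.unpair.2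

theorem ValsWithin.mono {N x s s' y : ℕ} (h : ValsWithin N x s y) (hs : s ≤ s') :
    ValsWithin N x s' y :=
  let ⟨e, he, hy⟩ := h
  ⟨e, he, Code.evaln_mono hs hy⟩

theorem mem_vals_iff_exists_valsWithin {N x y : ℕ} : y ∈ vals x N ↔ ∃ s, ValsWithin N x s y := by
  rw [mem_vals]
  constructor
  · rintro ⟨e, he, hy⟩
    obtain ⟨s, hs⟩ := Code.evaln_complete.1 (value_eq_some.1 hy)
    exact ⟨s, Encodable.encode e, mem_codesBelow.1 he, by rwa [Denumerable.ofNat_encode]⟩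
  · rintro ⟨s, e, he, hy⟩
    exact ⟨Denumerable.ofNat Code e, mem_codesBelow.2 (by rwa [Denumerable.encode_ofNat]),
      value_eq_some.2 (Code.evaln_sound hy)⟩

section Holds

variable {ν : ℕ → ℕ} {x : ℕ}

theorem HoldsWithin.mono {s s' j z : ℕ} (h : HoldsWithin ν x s j z) (hs : s ≤ s') :
    HoldsWithin ν x s' j z := by
  induction j using Nat.strong_induction_on generalizing z with
  | _ j ih =>
    match j, ih with
    | 0, _ | 1, _ | 2, _ => exact h
    | j + 3, ih =>
      exact ⟨ih (j + 2) (by omega) h.1, ih (j + 1) (by omega) h.2.1, h.2.2.1.mono hs,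
        ih j (by omega) h.2.2.2⟩

theorem mem_holds_add_three {j z : ℕ} : z ∈ holds ν x (j + 3) ↔
    z.unpair.1 ∈ holds ν x (j + 2) ∧ z.unpair.2.unpair.1 ∈ holds ν x (j + 1) ∧
      z.unpair.2.unpair.2.unpair.1 ∈ vals x (ν j) ∧
      z.unpair.2.unpair.2.unpair.2 ∈ holds ν x j := by
  simp only [holds, Finset.mem_image₂]
  constructor
  · rintro ⟨z₁, h₁, _, ⟨z₂, h₂, _, ⟨y, hy, z₃, h₃, rfl⟩, rfl⟩, rfl⟩
    simpa using ⟨h₁, h₂, hy, h₃⟩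
  · rintro ⟨h₁, h₂, hy, h₃⟩
    exact ⟨_, h₁, _, ⟨_, h₂, _, ⟨_, hy, _, h₃, Nat.pair_unpair _⟩, Nat.pair_unpair _⟩,
      Nat.pair_unpair _⟩

theorem mem_holds_iff_exists_holdsWithin {j z : ℕ} :
    z ∈ holds ν x j ↔ ∃ s, HoldsWithin ν x s j z := by
  induction j using Nat.strong_induction_on generalizing z with
  | _ j ih =>
    match j, ih with
    | 0, _ | 1, _ | 2, _ => simp [holds, HoldsWithin]
    | j + 3, ih =>
      rw [mem_holds_add_three, ih (j + 2) (by omega), ih (j + 1) (by omega), ih j (by omega),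
        mem_vals_iff_exists_valsWithin]
      constructor
      · rintro ⟨⟨s₁, h₁⟩, ⟨s₂, h₂⟩, ⟨s₃, h₃⟩, s₄, h₄⟩
        exact ⟨max (max s₁ s₂) (max s₃ s₄), h₁.mono (by omega), h₂.mono (by omega),
          h₃.mono (by omega), h₄.mono (by omega)⟩
      · rintro ⟨s, h₁, h₂, h₃, h₄⟩
        exact ⟨⟨s, h₁⟩, ⟨s, h₂⟩, ⟨s, h₃⟩, s, h₄⟩

end Holds

section Primrec

variable {α : Type} [Primcodable α] {x s y z : α → ℕ}

theorem primrecPred_valsWithin {N : α → ℕ} (hN : Primrec N) (hx : Primrec x) (hs : Primrec s)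
    (hy : Primrec y) : PrimrecPred fun v => ValsWithin (N v) (x v) (s v) (y v) := by
  have heval : PrimrecRel fun (e : ℕ) (v : α) =>
      Code.evaln (s v) (Denumerable.ofNat Code e) (x v) = some (y v) :=
    Primrec.eq.comp (Code.primrec_evaln.comp (((hs.comp Primrec.snd).pair
      ((Primrec.ofNat Code).comp Primrec.fst)).pair (hx.comp Primrec.snd)))
      (Primrec.option_some.comp (hy.comp Primrec.snd))
  exact primrecPred_exists_lt heval hN

theorem primrecPred_holdsWithin {ν : α → ℕ → ℕ} (hν : ∀ j, Primrec fun v => ν v j)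
    (hx : Primrec x) (hs : Primrec s) (j : ℕ) (hz : Primrec z) :
    PrimrecPred fun v => HoldsWithin (ν v) (x v) (s v) j (z v) := by
  induction j using Nat.strong_induction_on generalizing z with
  | _ j ih =>
    match j, ih with
    | 0, _ | 1, _ | 2, _ => exact Primrec.eq.comp hz (Primrec.const 0)
    | j + 3, ih =>
      have hz₂ := primrec_unpair_snd hz
      have hz₃ := primrec_unpair_snd hz₂
      exact (ih (j + 2) (by omega) (primrec_unpair_fst hz)).and
        ((ih (j + 1) (by omega) (primrec_unpair_fst hz₂)).and
          ((primrecPred_valsWithin (hν j) hx hs (primrec_unpair_fst hz₃)).and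
            (ih j (by omega) (primrec_unpair_snd hz₃))))

theorem primrec_grow_iterate {f g : α → ℕ} (hf : Primrec f) (hg : Primrec g) :
    Primrec fun v => grow^[f v] (g v) := by
  have hgrow : Primrec grow :=
    (Primrec.nat_add.comp (Primrec.nat_mul.comp (Primrec.const 4)
      (Primrec.nat_mul.comp Primrec.id Primrec.id)) (Primrec.const 4)).of_eq fun N => by
        simp [grow, pow_two]
  exact Primrec.nat_iterate hf hg (hgrow.comp Primrec.snd)

theorem primrec_two_pow {f : α → ℕ} (hf : Primrec f) : Primrec fun v => 2 ^ f v := by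
  have hdouble : Primrec₂ fun (_ : α) (n : ℕ) => 2 * n :=
    Primrec.nat_mul.comp (Primrec.const 2) Primrec.snd
  exact (Primrec.nat_iterate hf (Primrec.const 1) hdouble).of_eq fun v => by
    simp only [mul_left_iterate, mul_one]

end Primrec

/-! ### Decoding with the help of a stabilization time -/

theorem K_le_iff_mem_vals {x ℓ : ℕ} : K x ≤ ℓ ↔ x ∈ vals 0 (2 ^ ℓ) := by
  simp only [mem_vals, mem_codesBelow, value_eq_some_iff_eval, ← Nat.size_le]
  constructor
  · intro h
    obtain ⟨e, he, hx⟩ : K x ∈ {ℓ | ∃ e : Code, codeLength e ≤ ℓ ∧ e.eval 0 = Part.some x} :=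
      Nat.sInf_mem ⟨_, Code.const x, le_rfl, Code.eval_const x 0⟩
    exact ⟨e, he.trans h, hx⟩
  · exact fun h => Nat.sInf_le h

theorem K_le_Kt (T x : ℕ) : (K x : ℕ∞) ≤ Kt T x := by
  refine le_sInf fun ℓ ⟨e, he, hx⟩ => le_trans ?_ he
  have hK : K x ≤ codeLength e :=
    Nat.sInf_le ⟨e, le_rfl, Part.eq_some_iff.2 (Code.evaln_sound hx)⟩
  exact_mod_cast hK

theorem Kt_le_iff_valsWithin {T x ℓ : ℕ} : Kt T x ≤ ℓ ↔ ValsWithin (2 ^ ℓ) 0 T x := by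
  constructor
  · intro h
    have hne : {ℓ : ℕ∞ | ∃ e : Code, (codeLength e : ℕ∞) ≤ ℓ ∧
        Code.evaln T e 0 = some x}.Nonempty := by
      by_contra hempty
      rw [Kt, Set.not_nonempty_iff_eq_empty.1 hempty, sInf_empty] at h
      exact ENat.natCast_ne_top ℓ (top_le_iff.1 h)
    obtain ⟨e, he, hx⟩ := csInf_mem hne
    exact ⟨Encodable.encode e, Nat.size_le.1 (by exact_mod_cast he.trans h), by
      rwa [Denumerable.ofNat_encode]⟩
  · rintro ⟨e, he, hx⟩
    refine sInf_le ⟨Denumerable.ofNat Code e, ?_, hx⟩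
    rw [codeLength, Denumerable.encode_ofNat]
    exact_mod_cast Nat.size_le.2 he

theorem Kt_eq_K_of_Tn_le {n T : ℕ} (hT : Tn n ≤ T) {x : ℕ} (hx : x < 2 ^ n) : Kt T x = K x := by
  have hstable : ∃ S, ∀ x < 2 ^ n, Kt S x = (K x : ℕ∞) := by
    choose s hs using fun x =>
      mem_vals_iff_exists_valsWithin.1 (K_le_iff_mem_vals.1 (le_refl (K x)))
    exact ⟨(Finset.range (2 ^ n)).sup s, fun x hx => le_antisymm (Kt_le_iff_valsWithin.2
      ((hs x).mono (Finset.le_sup (Finset.mem_range.2 hx)))) (K_le_Kt _ x)⟩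
  have hTn : Kt (Tn n) x ≤ K x := (Nat.sInf_mem hstable x hx).le
  exact le_antisymm (Kt_le_iff_valsWithin.2 ((Kt_le_iff_valsWithin.1 hTn).mono hT)) (K_le_Kt T x)

theorem K_le_iff_valsWithin {n T : ℕ} (hT : Tn n ≤ T) {x : ℕ} (hx : x < 2 ^ n) {ℓ : ℕ} :
    K x ≤ ℓ ↔ ValsWithin (2 ^ ℓ) 0 T x := by
  rw [← Kt_le_iff_valsWithin, Kt_eq_K_of_Tn_le hT hx, Nat.cast_le]

/-- The sizes `grow^[q] N`, `grow^[q + 1] N`, …, at which carriers are built. -/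
def levels (N q i : ℕ) : ℕ := grow^[i + q] N

theorem grow_levels_le (N q i : ℕ) : grow (levels N q i) ≤ levels N q (i + 1) := by
  rw [levels, levels, Nat.add_right_comm, Function.iterate_succ_apply']

theorem le_grow_iterate (k N : ℕ) : N ≤ grow^[k] N :=
  Function.id_le_iterate_of_id_le (fun N => (lt_grow N).le) k N

/-- The parameter supplied to the decoder: the point at which the carrier asks its questions, the
complexity to be avoided, the length of the description of the time, and the levels. -/
def decoderParam (x m L N r : ℕ) : ℕ := Nat.pair x (Nat.pair m (Nat.pair L (Nat.pair N r)))

theorem pair_lt_two_pow_two_pow {a b l k : ℕ} (hlk : l ≤ k) (ha : a < 2 ^ 2 ^ l)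
    (hb : b < 2 ^ 2 ^ k) : Nat.pair a b < 2 ^ 2 ^ (k + 1) := by
  rw [pow_succ, pow_mul, pair_lt_sq_iff]
  exact ⟨ha.trans_le (by gcongr <;> norm_num), hb⟩

theorem decoderParam_lt {x m L N r : ℕ} (hx : x < 2 ^ 2 ^ r) (hm : m < 2 ^ 2 ^ r)
    (hL : L < 2 ^ 2 ^ r) (hN : N < 2 ^ 2 ^ r) (hr : r < 2 ^ 2 ^ r) :
    decoderParam x m L N r < 2 ^ 2 ^ (r + 4) :=
  pair_lt_two_pow_two_pow (by omega) hx (pair_lt_two_pow_two_pow (by omega) hm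
    (pair_lt_two_pow_two_pow (by omega) hL (pair_lt_two_pow_two_pow le_rfl hN hr)))

theorem exists_code_decodeTime (J : ℕ) : ∃ c : Code, ∀ {x m L N r T : ℕ},
    (vals 0 (2 ^ L)).card ≤ (holds (levels N (r + 6)) x J).card → T ∈ vals 0 (2 ^ L) →
      ∃ z ∈ holds (levels N (r + 6)) x J,
        value c (Nat.pair (decoderParam x m L N r) z) = some T := by
  have hsnd := primrec_unpair_snd (Primrec.fst (α := ℕ) (β := ℕ))
  have hL := primrec_unpair_snd hsnd
  have hNr := primrec_unpair_snd hL
  have hs := primrec_unpair_fst (Primrec.snd (α := ℕ) (β := ℕ))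
  have hz := primrec_unpair_snd (Primrec.snd (α := ℕ) (β := ℕ))
  have hlevels (j : ℕ) := primrec_grow_iterate (Primrec.nat_add.comp (Primrec.const j)
    (Primrec.nat_add.comp (primrec_unpair_snd hNr) (Primrec.const 6))) (primrec_unpair_fst hNr)
  have hholds : PrimrecRel fun w u : ℕ => HoldsWithin
      (levels w.unpair.2.unpair.2.unpair.2.unpair.1 (w.unpair.2.unpair.2.unpair.2.unpair.2 + 6))
      w.unpair.1 u.unpair.1 J u.unpair.2 :=
    primrecPred_holdsWithin hlevels (primrec_unpair_fst Primrec.fst) hs J hz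
  have hvals : PrimrecRel fun w u : ℕ =>
      ValsWithin (2 ^ w.unpair.2.unpair.2.unpair.1) 0 u.unpair.1 u.unpair.2 :=
    primrecPred_valsWithin (primrec_two_pow (primrec_unpair_fst hL)) (Primrec.const 0) hs hz
  obtain ⟨c, hc⟩ := exists_code_surjOn hholds hvals
  refine ⟨c, fun hcard hT => hc (fun z => ?_) (fun y => ?_) hcard _ hT⟩
  · simpa [decoderParam] using mem_holds_iff_exists_holdsWithin
  · simpa [decoderParam] using mem_vals_iff_exists_valsWithin

theorem exists_code_leastAvoided : ∃ c : Code, ∀ {m T : ℕ}, (∃ y, ¬ ValsWithin (2 ^ m) 0 T y) →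
    ∃ y, IsLeast {y | ¬ ValsWithin (2 ^ m) 0 T y} y ∧ value c (Nat.pair m T) = some y := by
  have havoids : PrimrecRel fun v y : ℕ => ¬ ValsWithin (2 ^ v.unpair.1) 0 v.unpair.2 y :=
    (primrecPred_valsWithin (primrec_two_pow (primrec_unpair_fst Primrec.fst)) (Primrec.const 0)
      (primrec_unpair_snd Primrec.fst) Primrec.snd).not
  obtain ⟨c, hc⟩ := exists_code_find havoids
  refine ⟨c, fun {m T} ⟨y, hy⟩ => ?_⟩
  simpa using hc (Nat.pair m T) y (by simpa using hy)

theorem exists_leastAvoided_mem_vals (J : ℕ) : ∃ B, ∀ {x m L N r T : ℕ}, B ≤ N →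
    x < 2 ^ 2 ^ r → m < 2 ^ 2 ^ r → L < 2 ^ 2 ^ r → N < 2 ^ 2 ^ r → r < 2 ^ 2 ^ r →
    (vals 0 (2 ^ L)).card ≤ (holds (levels N (r + 6)) x J).card → T ∈ vals 0 (2 ^ L) →
    (∃ y, ¬ ValsWithin (2 ^ m) 0 T y) →
      ∃ y ∈ vals 0 (levels N (r + 6) J), IsLeast {y | ¬ ValsWithin (2 ^ m) 0 T y} y := by
  obtain ⟨d, hd⟩ := exists_code_decodeTime J
  obtain ⟨a, ha⟩ := exists_code_leastAvoided
  obtain ⟨d', hd'⟩ := exists_code_comp_primrec d (primrec_pair (primrec_unpair_fst Primrec.id)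
    (primrec_unpair_snd (primrec_unpair_snd Primrec.id)))
  obtain ⟨m', hm'⟩ := exists_code_of_primrec
    (primrec_unpair_fst (primrec_unpair_snd (primrec_unpair_fst (Primrec.id (α := ℕ)))))
  obtain ⟨B, hB⟩ := exists_carries (Code.comp a (Code.pair m' d')) J
  obtain ⟨B', hB'⟩ := exists_isConst_mem_codesBelow
  refine ⟨max B B', fun {x m L N r T} hN hx hm hL hNr hr hcard hT havoid => ?_⟩
  obtain ⟨z, hz, hzT⟩ := hd hcard hT (m := m)
  obtain ⟨y, hy, hay⟩ := ha havoid
  obtain ⟨e, he, hconst⟩ := hB' (r + 4) _ (decoderParam_lt hx hm hL hNr hr)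
  have he' : e ∈ codesBelow (grow^[r + 4] N) :=
    codesBelow_mono (grow_mono.iterate _ (le_of_max_le_right hN)) he
  have hlevel : grow (grow (grow^[r + 4] N)) ≤ levels N (r + 6) 0 := by
    simp only [levels, zero_add, ← Function.iterate_succ_apply', le_refl]
  obtain ⟨f, hf, hcarry⟩ := hB (grow_levels_le N (r + 6))
    ((le_of_max_le_left hN).trans (le_grow_iterate _ N)) hlevel ⟨e, he', hconst⟩ z
    (by simpa [decoderParam] using hz)
  refine ⟨y, mem_vals.2 ⟨f, hf, ?_⟩, hy⟩
  have hmval : value m' (Nat.pair (decoderParam x m L N r) (Nat.pair 0 z)) = some m := by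
    simp [hm', decoderParam]
  simp [hcarry 0, value_comp, value_pair, hd', hzT, hmval, hay]

/-! ### Choosing the scale -/

theorem grow_iterate_mono_left {k l : ℕ} (h : k ≤ l) (a : ℕ) : grow^[k] a ≤ grow^[l] a :=
  Function.monotone_iterate_of_id_le (fun N => (lt_grow N).le) h a

theorem eight_mul_grow_le {u : ℕ} (hu : 1 ≤ u) : 8 * grow u ≤ (8 * u) ^ 2 := by
  unfold grow; nlinarith

theorem eight_mul_grow_iterate_le {a : ℕ} (ha : 1 ≤ a) (k : ℕ) :
    8 * grow^[k] a ≤ (8 * a) ^ 2 ^ k := by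
  induction k with
  | zero => simp
  | succ k ih =>
    rw [Function.iterate_succ_apply', pow_succ, pow_mul]
    exact (eight_mul_grow_le (ha.trans (le_grow_iterate k a))).trans (Nat.pow_le_pow_left ih 2)

-- The relative gap between the orbits of `a` and `a + 1` improves with every step.
theorem succ_mul_grow_iterate_le {a : ℕ} (ha : 2 ≤ a) {s k : ℕ} (hs : 1 ≤ s) (hk : a ≤ k + s) :
    (s + 1) * grow^[k] a ≤ s * grow^[k] (a + 1) := by
  induction k generalizing s with
  | zero =>
    simp only [Function.iterate_zero_apply]
    nlinarith
  | succ k ih =>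
    have hgap := ih (s := s + 1) (by omega) (by omega)
    have hu : 2 ≤ grow^[k] a := ha.trans (le_grow_iterate k a)
    simp only [Function.iterate_succ_apply', grow]
    set u := grow^[k] a
    set v := grow^[k] (a + 1)
    have hsq := Nat.mul_le_mul_left s (Nat.pow_le_pow_left hgap 2)
    have hslack : (s + 1) ^ 2 ≤ u ^ 2 * (s ^ 2 + s - 1) := by
      obtain ⟨t, rfl⟩ := Nat.exists_eq_add_of_le' hs
      rw [show (t + 1) ^ 2 + (t + 1) - 1 = t ^ 2 + 3 * t + 1 by ring_nf; omega]
      nlinarith [Nat.pow_le_pow_left hu 2, Nat.zero_le (t ^ 2 + 3 * t + 1)]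
    have hscaled : (s + 1) ^ 2 * ((s + 1) * (4 * u ^ 2 + 4)) ≤
        (s + 1) ^ 2 * (s * (4 * v ^ 2 + 4)) := by
      zify [show 1 ≤ s ^ 2 + s by nlinarith] at hslack hsq ⊢
      nlinarith
    exact Nat.le_of_mul_le_mul_left hscaled (by positivity)

theorem exists_grow_iterate_le_lt {A X : ℕ} (hA : 1 ≤ A) (hX : A ≤ X) : ∃ k N, A ≤ N ∧
    N < grow A ∧ grow^[k] N ≤ X ∧ X < grow^[k] (N + 1) ∧ logCap X ≤ 2 ^ k * logCap N := by
  induction X using Nat.strong_induction_on with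
  | _ X ih =>
    rcases lt_or_ge X (grow A) with h | h
    · exact ⟨0, X, hX, h, by simp, by simp, by simp⟩
    · have h4 : 4 ≤ X := (Nat.le_add_left 4 _).trans h
      obtain ⟨k, N, hAN, hNG, hle, hlt, hcap⟩ := ih _ (root_lt h4) (le_root h)
      refine ⟨k + 1, N, hAN, hNG, ?_, ?_, ?_⟩
      · rw [Function.iterate_succ_apply']
        exact (grow_mono hle).trans (grow_root_le h4)
      · rw [Function.iterate_succ_apply']
        exact (lt_grow_root_succ X).trans_le (grow_mono hlt)
      · calc logCap X ≤ 2 * logCap (root X) :=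
              logCap_le_two_mul (hA.trans (le_root h)) (by omega) (lt_grow_root_succ X).le
          _ ≤ 2 * (2 ^ k * logCap N) := by gcongr
          _ = 2 ^ (k + 1) * logCap N := by ring

theorem le_two_pow_mul_of_two_pow_lt {M k a : ℕ} (ha : 1 ≤ a) (h : 2 ^ M < grow^[k] a) :
    M ≤ 2 ^ k * (a + 3) := by
  have hpow : 2 ^ M ≤ 2 ^ (2 ^ k * (a + 3)) := by
    calc 2 ^ M ≤ 8 * grow^[k] a := by omega
      _ ≤ (8 * a) ^ 2 ^ k := eight_mul_grow_iterate_le ha k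
      _ ≤ (2 ^ (a + 3)) ^ 2 ^ k := by
          have := Nat.lt_two_pow_self (n := a)
          exact Nat.pow_le_pow_left (by rw [pow_add]; omega) _
      _ = 2 ^ (2 ^ k * (a + 3)) := by rw [← pow_mul, mul_comm]
  exact (Nat.pow_le_pow_iff_right one_lt_two).1 hpow

theorem two_pow_mul_lt_two_pow_two_pow {E r : ℕ} (h : E ≤ r) : 2 ^ r * E < 2 ^ 2 ^ r := by
  have htwo : r + E ≤ 2 ^ r := by
    rcases r with _ | r
    · omega
    · have := Nat.lt_two_pow_self (n := r)
      rw [pow_succ]; omega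
  calc 2 ^ r * E < 2 ^ r * 2 ^ E := by gcongr; exact Nat.lt_two_pow_self
    _ = 2 ^ (r + E) := (pow_add 2 r E).symm
    _ ≤ 2 ^ 2 ^ r := Nat.pow_le_pow_right two_pos htwo

theorem exists_scale (A J X : ℕ) : ∃ M₀, ∀ M ≥ M₀, ∃ N r, A ≤ N ∧ M + N + r + X < 2 ^ 2 ^ r ∧
    levels N (r + 6) J ≤ 2 ^ (M - 1) ∧ logCap (2 ^ M) ≤ 2 ^ (J + (r + 6)) * logCap (N + 1) := by
  set G := grow (A + 3)
  set E := 2 ^ (J + 6) * (G + 3) + G + X + 1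
  have hAG : A + 3 < G := lt_grow _
  refine ⟨grow^[J + 6 + E] G, fun M hM => ?_⟩
  have hM2 : M < 2 ^ M := Nat.lt_two_pow_self
  have hGM : G ≤ M := (le_grow_iterate _ G).trans hM
  obtain ⟨k, N', hAN, hNG, hle, hlt, hcap⟩ :=
    exists_grow_iterate_le_lt (show 1 ≤ A + 3 by omega) (show A + 3 ≤ 2 ^ M by omega)
  have hk : J + 6 + E ≤ k := by
    by_contra! hk
    exact hlt.not_ge (((grow_mono.iterate k hNG).trans (grow_iterate_mono_left hk.le G)).trans
      (hM.trans hM2.le))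
  obtain ⟨N, rfl⟩ := Nat.exists_eq_add_of_le' (show 1 ≤ N' by omega)
  obtain ⟨r, rfl⟩ := Nat.exists_eq_add_of_le (show J + 6 ≤ k by omega)
  rw [add_assoc, add_comm 6 r] at hle hlt hcap
  refine ⟨N, r, by omega, ?_, ?_, hcap⟩
  · have hMr : M ≤ 2 ^ r * (2 ^ (J + 6) * (G + 3)) := by
      calc M ≤ 2 ^ (J + (r + 6)) * (N + 1 + 1 + 3) :=
            le_two_pow_mul_of_two_pow_lt (by omega) hlt
        _ ≤ 2 ^ (J + (r + 6)) * (G + 3) := Nat.mul_le_mul_left _ (by omega)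
        _ = 2 ^ r * (2 ^ (J + 6) * (G + 3)) := by ring
    calc M + N + r + X
        ≤ 2 ^ r * (2 ^ (J + 6) * (G + 3)) + 2 ^ r * G + 2 ^ r * 1 + 2 ^ r * X := by
          have hr : r < 2 ^ r := Nat.lt_two_pow_self
          gcongr
          · exact le_mul_of_one_le_of_le Nat.one_le_two_pow (by omega)
          · omega
          · exact Nat.le_mul_of_pos_left X (by positivity)
      _ = 2 ^ r * E := by ring
      _ < 2 ^ 2 ^ r := two_pow_mul_lt_two_pow_two_pow (by omega)
  · have hgap := succ_mul_grow_iterate_le (a := N) (by omega) (s := 1) (k := J + (r + 6)) le_rfl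
      (by omega)
    have hM1 : 2 ^ M = 2 * 2 ^ (M - 1) := (mul_pow_sub_one (by omega) 2).symm
    unfold levels
    omega

theorem exists_mul_logVals_le_logHolds_levels {θ : ℝ} (hθ₀ : 0 ≤ θ) (hθ₁ : θ < 1) :
    ∃ J, ∀ {N q : ℕ}, 1 ≤ N → ∀ x,
      θ * (2 ^ (J + q) * logVals x N) ≤ logHolds (levels N q) x J := by
  obtain ⟨J, hJ⟩ := exists_mul_logVals_le_logHolds hθ₁
  refine ⟨J, fun {N q} hN x => ?_⟩
  have hq : 2 ^ q * logVals x N ≤ logVals x (levels N q 0) := by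
    simpa [levels] using two_pow_mul_logVals_le (grow_levels_le N 0) (by simpa [levels]) x q
  calc θ * (2 ^ (J + q) * logVals x N) = θ * (2 ^ J * (2 ^ q * logVals x N)) := by ring
    _ ≤ θ * (2 ^ J * logVals x (levels N q 0)) := by gcongr
    _ ≤ logHolds (levels N q) x J :=
        hJ (grow_levels_le N q) (hN.trans (by simpa [levels] using le_grow_iterate q N)) x J le_rfl

theorem exists_logVals_le_mul : ∃ τ : ℝ, 0 < τ ∧ τ < 1 ∧ ∃ c : ℕ, ∀ {n L : ℕ}, L + c ≤ n →
    ∀ x, logVals x (2 ^ L) ≤ τ * (τ * n) := by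
  obtain ⟨ρ, hρ₀, hρ₁, C, hC⟩ := exists_logb_codeCap_two_pow_le
  refine ⟨√ρ, Real.sqrt_pos.2 hρ₀, (Real.sqrt_lt' one_pos).2 (by simpa), ⌈C / ρ⌉₊, ?_⟩
  intro n L hLn x
  have hCρ : C ≤ ρ * ⌈C / ρ⌉₊ := (div_le_iff₀' hρ₀).1 (Nat.le_ceil _)
  have hLn' : (L : ℝ) + ⌈C / ρ⌉₊ ≤ n := mod_cast hLn
  rw [← mul_assoc, Real.mul_self_sqrt hρ₀.le]
  calc logVals x (2 ^ L) ≤ Real.logb 2 (codeCap (2 ^ L)) :=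
        Real.logb_le_logb_of_le one_lt_two (mod_cast card_vals_pos x Nat.one_le_two_pow)
          (mod_cast card_vals_le_codeCap x _)
    _ ≤ ρ * L + ρ * ⌈C / ρ⌉₊ := (hC L).trans (by gcongr)
    _ ≤ ρ * n := by rw [← mul_add]; gcongr

theorem le_logCap_of_two_pow_le {n N : ℕ} (h : 2 ^ n ≤ codeCap N) : (n : ℝ) ≤ logCap N := by
  have hlogb : (n : ℝ) ≤ Real.logb 2 (codeCap N) := by
    rw [Real.le_logb_iff_rpow_le one_lt_two (mod_cast (Nat.one_le_two_pow).trans h)]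
    exact_mod_cast h
  unfold logCap; linarith

theorem exists_card_vals_le_card_holds : ∃ J, ∀ A, ∃ c, ∀ {n M L : ℕ}, 2 ^ n ≤ codeCap (2 ^ M) →
    L + c ≤ n → ∃ N r x, A ≤ N ∧ M + N + r + x < 2 ^ 2 ^ r ∧ levels N (r + 6) J ≤ 2 ^ (M - 1) ∧
      (vals 0 (2 ^ L)).card ≤ (holds (levels N (r + 6)) x J).card := by
  obtain ⟨τ, hτ₀, hτ₁, c, hc⟩ := exists_logVals_le_mul
  obtain ⟨J, hJ⟩ := exists_mul_logVals_le_logHolds_levels hτ₀.le hτ₁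
  obtain ⟨X, B, hXB⟩ := isAttained_of_lt_one hτ₀.le hτ₁
  refine ⟨J, fun A => ?_⟩
  obtain ⟨M₀, hM₀⟩ := exists_scale (max A (B + 1)) J X
  refine ⟨c + M₀, fun {n M L} hn hL => ?_⟩
  have hnM : n ≤ M := (Nat.pow_le_pow_iff_right one_lt_two).1 (hn.trans (codeCap_le _))
  obtain ⟨N, r, hAN, hsmall, hlevel, hcap⟩ := hM₀ M (by omega)
  obtain ⟨x, hxX, hx⟩ := hXB N (by omega)
  refine ⟨N, r, x, by omega, by omega, hlevel, ?_⟩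
  have hlog : logVals 0 (2 ^ L) ≤ logHolds (levels N (r + 6)) x J := by
    calc logVals 0 (2 ^ L) ≤ τ * (τ * n) := hc (by omega) 0
      _ ≤ τ * (τ * (2 ^ (J + (r + 6)) * logCap (N + 1))) := by
          have := (le_logCap_of_two_pow_le hn).trans hcap
          gcongr
      _ = τ * (2 ^ (J + (r + 6)) * (τ * logCap (N + 1))) := by ring
      _ ≤ τ * (2 ^ (J + (r + 6)) * logVals x N) := by gcongr
      _ ≤ logHolds (levels N (r + 6)) x J := hJ (by omega) x
  have hone (i : ℕ) : 1 ≤ levels N (r + 6) i :=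
    (show 1 ≤ N by omega).trans (le_grow_iterate _ N)
  exact_mod_cast (Real.logb_le_logb one_lt_two
    (mod_cast card_vals_pos 0 Nat.one_le_two_pow) (mod_cast card_holds_pos hone x J)).1 hlog

theorem two_pow_le_codeCap {n M : ℕ} (h : ∀ y < 2 ^ n, K y ≤ M) : 2 ^ n ≤ codeCap (2 ^ M) := by
  calc 2 ^ n = (Finset.range (2 ^ n)).card := (Finset.card_range _).symm
    _ ≤ (vals 0 (2 ^ M)).card := Finset.card_le_card fun y hy =>
        K_le_iff_mem_vals.1 (h y (Finset.mem_range.1 hy))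
    _ ≤ codeCap (2 ^ M) := card_vals_le_codeCap 0 _

theorem complexity_of_stabilization_time_general : ∃ c, ∀ n T, Tn n ≤ T → n ≤ K T + c := by
  obtain ⟨J, hJ⟩ := exists_card_vals_le_card_holds
  obtain ⟨A, hA⟩ := exists_leastAvoided_mem_vals J
  obtain ⟨c, hc⟩ := hJ A
  refine ⟨c + 1, fun n T hT => ?_⟩
  by_contra! hn
  obtain ⟨y₀, hy₀, hmax⟩ := Finset.exists_max_image (Finset.range (2 ^ n)) K ⟨0, by simp⟩
  simp only [Finset.mem_range] at hy₀ hmax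
  have hcap : 2 ^ n ≤ codeCap (2 ^ K y₀) := two_pow_le_codeCap hmax
  have hnK : n ≤ K y₀ := (Nat.pow_le_pow_iff_right one_lt_two).1 (hcap.trans (codeCap_le _))
  obtain ⟨N, r, x, hAN, hsmall, hlevel, hcard⟩ := hc (L := K T) hcap (by omega)
  have hy₀_avoided : ¬ ValsWithin (2 ^ (K y₀ - 1)) 0 T y₀ := by
    rw [← K_le_iff_valsWithin hT hy₀]; omega
  obtain ⟨y, hy, hleast⟩ := hA hAN (by omega) (m := K y₀ - 1) (by omega) (L := K T) (by omega)
    (by omega) (by omega) hcard (K_le_iff_mem_vals.1 le_rfl) ⟨y₀, hy₀_avoided⟩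
  have hyn : y < 2 ^ n := (hleast.2 hy₀_avoided).trans_lt hy₀
  exact hleast.1 ((K_le_iff_valsWithin hT hyn).1 (K_le_iff_mem_vals.2 (vals_mono 0 hlevel hy)))

/-- every `T ≥ Tn n` has complexity at least `n - O(log n)`:
there is a constant `c` with `K T + c * Nat.size n ≥ n` for all `n ≥ 1` and `T ≥ Tn n`. -/
theorem complexity_of_stabilization_time :
    ∃ c : ℕ, ∀ n : ℕ, 1 ≤ n → ∀ T : ℕ, Tn n ≤ T → n ≤ K T + c * Nat.size n := by
  obtain ⟨c, hc⟩ := complexity_of_stabilization_time_general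
  refine ⟨c, fun n hn T hT => (hc n T hT).trans (Nat.add_le_add_left ?_ _)⟩
  exact Nat.le_mul_of_pos_right c (Nat.size_pos.2 hn)
end

section
/- For every n : ℕ and t : ℕ, let x(n,t) be the least x < 2^n maximizing K^t among {x | x < 2^n}. Then K^t(x(n,t)) ≥ n for every t; moreover, for every t ≥ T'_n one has 2·K(x(n,t)) ≥ n. -/
/-!
At most `2 ^ m` codes have length at most `m`, and each outputs at most one number, so some
`x < 2 ^ n` has `Kt t x ≥ n`, and hence so has the maximizer `xnt n t`. On the other hand, shortest
codes for the finitely many `x < 2 ^ n` all halt within a common time, so the minimum defining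
`Tn' n` is attained. As `Kt t x` is antitone in `t`, every `t ≥ Tn' n` satisfies
`n ≤ Kt t (xnt n t) ≤ 2 * K (xnt n t)`.
-/

open Nat.Partrec (Code)

/-- `xnt n t`: the least `x < 2 ^ n` maximizing the time-bounded complexity `Kt t`
among all `x < 2 ^ n`. -/
noncomputable def xnt (n t : ℕ) : ℕ :=
  sInf {x : ℕ | x < 2 ^ n ∧ ∀ y < 2 ^ n, Kt t y ≤ Kt t x}

open Filter

theorem K_le_iff {x m : ℕ} :
    K x ≤ m ↔ ∃ e : Code, codeLength e ≤ m ∧ e.eval 0 = Part.some x := by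
  refine ⟨fun hm => ?_, fun h => Nat.sInf_le h⟩
  obtain ⟨e, he, heval⟩ : K x ∈ {ℓ | ∃ e : Code, codeLength e ≤ ℓ ∧ e.eval 0 = Part.some x} :=
    Nat.sInf_mem ⟨_, Code.const x, le_rfl, Code.eval_const x 0⟩
  exact ⟨e, he.trans hm, heval⟩

theorem Kt_le_coe_iff {t x m : ℕ} :
    Kt t x ≤ m ↔ ∃ e : Code, codeLength e ≤ m ∧ Code.evaln t e 0 = some x := by
  refine ⟨fun hm => ?_, fun ⟨e, he, heval⟩ => sInf_le ⟨e, by exact_mod_cast he, heval⟩⟩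
  have hlt : Kt t x < (m + 1 : ℕ) := hm.trans_lt (by exact_mod_cast m.lt_succ_self)
  obtain ⟨ℓ, ⟨e, he, heval⟩, hℓ⟩ := sInf_lt_iff.1 hlt
  exact ⟨e, Nat.lt_succ_iff.1 (by exact_mod_cast he.trans_lt hℓ), heval⟩

theorem antitone_Kt (x : ℕ) : Antitone fun t => Kt t x :=
  fun _ _ hst => sInf_le_sInf fun _ ⟨e, he, heval⟩ => ⟨e, he, Code.evaln_mono hst heval⟩

theorem card_le_two_pow_of_forall_Kt_le {S : Finset ℕ} {t m : ℕ} (hS : ∀ x ∈ S, Kt t x ≤ m) :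
    S.card ≤ 2 ^ m := by
  let output (k : ℕ) : ℕ := (Code.evaln t (Denumerable.ofNat Code k) 0).getD 0
  have hsub : S ⊆ (Finset.range (2 ^ m)).image output := fun x hx => by
    obtain ⟨e, he, heval⟩ := Kt_le_coe_iff.1 (hS x hx)
    refine Finset.mem_image.2 ⟨Encodable.encode e, Finset.mem_range.2 (Nat.size_le.1 he), ?_⟩
    simp only [output, Denumerable.ofNat_encode, heval, Option.getD_some]
  calc S.card ≤ ((Finset.range (2 ^ m)).image output).card := Finset.card_le_card hsub
    _ ≤ (Finset.range (2 ^ m)).card := Finset.card_image_le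
    _ = 2 ^ m := Finset.card_range _

theorem exists_lt_two_pow_le_Kt (n t : ℕ) : ∃ x < 2 ^ n, (n : ℕ∞) ≤ Kt t x := by
  obtain _ | m := n
  · exact ⟨0, by simp⟩
  by_contra! hlt
  have hle : ∀ x ∈ Finset.range (2 ^ (m + 1)), Kt t x ≤ m := fun x hx =>
    Order.le_of_lt_add_one (by exact_mod_cast hlt x (Finset.mem_range.1 hx))
  have hcard : 2 ^ (m + 1) ≤ 2 ^ m := by simpa using card_le_two_pow_of_forall_Kt_le hle
  exact hcard.not_gt (Nat.pow_lt_pow_succ one_lt_two)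

theorem xnt_spec (n t : ℕ) : xnt n t < 2 ^ n ∧ ∀ y < 2 ^ n, Kt t y ≤ Kt t (xnt n t) := by
  have hne : {x | x < 2 ^ n ∧ ∀ y < 2 ^ n, Kt t y ≤ Kt t x}.Nonempty :=
    Set.exists_max_image (Set.Iio (2 ^ n)) (Kt t) (Set.finite_Iio _) ⟨0, Nat.two_pow_pos n⟩
  exact Nat.sInf_mem hne

theorem le_Kt_xnt (n t : ℕ) : (n : ℕ∞) ≤ Kt t (xnt n t) := by
  obtain ⟨x, hx, hle⟩ := exists_lt_two_pow_le_Kt n t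
  exact hle.trans ((xnt_spec n t).2 x hx)

theorem eventually_Kt_le_K (x : ℕ) : ∀ᶠ T in atTop, Kt T x ≤ K x := by
  obtain ⟨e, he, heval⟩ := K_le_iff.1 (le_refl (K x))
  obtain ⟨T, hT⟩ := Code.evaln_complete.1 (Part.eq_some_iff.1 heval)
  filter_upwards [eventually_ge_atTop T] with t ht
  exact Kt_le_coe_iff.2 ⟨e, he, Code.evaln_mono ht hT⟩

theorem Kt_le_two_mul_K {n t x : ℕ} (ht : Tn' n ≤ t) (hx : x < 2 ^ n) :
    Kt t x ≤ 2 * (K x : ℕ∞) := by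
  have hlarge : ∀ᶠ T in atTop, ∀ x < 2 ^ n, Kt T x ≤ K x :=
    (eventually_all_finite (Set.finite_Iio (2 ^ n))).2 fun x _ => eventually_Kt_le_K x
  obtain ⟨T, hT⟩ := hlarge.exists
  have hne : {T | ∀ x < 2 ^ n, Kt T x ≤ 2 * (K x : ℕ∞)}.Nonempty :=
    ⟨T, fun x hx => (hT x hx).trans (le_mul_of_one_le_left' one_le_two)⟩
  have hTn' : ∀ x < 2 ^ n, Kt (Tn' n) x ≤ 2 * (K x : ℕ∞) := Nat.sInf_mem hne
  exact (antitone_Kt x ht).trans (hTn' x hx)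

/-- `Kt t (xnt n t) ≥ n` for every `t`; moreover, for every `t ≥ Tn' n`
one has `2 * K (xnt n t) ≥ n`. -/
theorem time_bounded_maximizer (n : ℕ) :
    (∀ t : ℕ, (n : ℕ∞) ≤ Kt t (xnt n t)) ∧
    (∀ t : ℕ, Tn' n ≤ t → n ≤ 2 * K (xnt n t)) := by
  refine ⟨le_Kt_xnt n, fun t ht => ?_⟩
  have hle : (n : ℕ∞) ≤ 2 * (K (xnt n t) : ℕ∞) :=
    (le_Kt_xnt n t).trans (Kt_le_two_mul_K ht (xnt_spec n t).1)
  exact_mod_cast hle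
end
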